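/- arXiv:1104.0580 — 2 statements merged into one kernel-verified Lean document; each statement's English description precedes it below -/
import Mathlib

section
/- For any real numbers α, β, T with |α| ≤ 1, |β − π| < 1, and T > 0, there exists a unique solution x(t) of the pendulum equation ẍ + sin x = 0 on [0,T] satisfying x(0) = α, x(T) = β, and α ≤ x(t) ≤ max(β, π) for all 0 ≤ t ≤ T. Moreover this solution depends smoothly on the parameters (T, α, β). -/
/-- `IsPendSolOn x v s` : on the set `s`, `x` solves the pendulum equation
`ẍ + sin x = 0`, with velocity `v`. -/
def IsPendSolOn (x v : ℝ → ℝ) (s : Set ℝ) : Prop :=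
  ∀ t ∈ s, HasDerivAt x (v t) t ∧ HasDerivAt v (-Real.sin (x t)) t

/-- The boundary value problem of the Pendulum Lemma (first case):
a solution of `ẍ + sin x = 0` on `[0,T]` with `x(0) = α`, `x(T) = β`,
confined to `[α, max β π]`. -/
def PendBVP (x : ℝ → ℝ) (T α β : ℝ) : Prop :=
  (∃ v : ℝ → ℝ, IsPendSolOn x v (Set.Icc 0 T)) ∧
  x 0 = α ∧ x T = β ∧ ∀ t ∈ Set.Icc 0 T, α ≤ x t ∧ x t ≤ max β Real.pi


section
open Set Filter Topology
open scoped ContDiff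

namespace Pend

lemma fixed_smooth {P B : Type*} [NormedAddCommGroup P] [NormedSpace ℝ P] [CompleteSpace P]
    [NormedAddCommGroup B] [NormedSpace ℝ B] [CompleteSpace B]
    (N : P × B → B) (hN : ContDiff ℝ ∞ N) (u : P → B) (hu : ∀ p, N (p, u p) = u p)
    (p0 : P) (n : ℕ) (K : NNReal) (hK1 : K < 1)
    (hK : ∀ᶠ p in 𝓝 p0, LipschitzWith K ((fun x => N (p, x))^[n])) :
    ContDiffAt ℝ ∞ u p0 := by
  set M : P × B → B := fun q => (fun x => N (q.1, x))^[n] q.2 with hM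
  have hMs : ContDiff ℝ ∞ M := by
    have : ∀ m : ℕ, ContDiff ℝ ∞ (fun q : P × B => (fun x => N (q.1, x))^[m] q.2) := by
      intro m
      induction m with
      | zero => simpa using contDiff_snd
      | succ k ih =>
        simp only [Function.iterate_succ_apply']
        exact hN.comp (contDiff_fst.prodMk ih)
    exact this n
  have hMu : ∀ p, M (p, u p) = u p := by
    intro p
    exact Function.iterate_fixed (hu p) n
  set f : P × B → B := fun q => q.2 - M q with hf
  have hfs : ContDiff ℝ ∞ f := contDiff_snd.sub hMs
  have hinv : (fderiv ℝ f (p0, u p0) ∘L .inr ℝ P B).IsInvertible := by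
    set A : B →L[ℝ] B := fderiv ℝ M (p0, u p0) ∘L .inr ℝ P B with hA
    have h1 : fderiv ℝ f (p0, u p0) ∘L .inr ℝ P B = 1 - A := by
      have : fderiv ℝ f (p0, u p0) = ContinuousLinearMap.snd ℝ P B - fderiv ℝ M (p0, u p0) := by
        have := (hasFDerivAt_snd (𝕜 := ℝ) (p := (p0, u p0))).sub
          ((hMs.differentiable (by simp)) (p0, u p0)).hasFDerivAt
        exact this.fderiv
      rw [this]; ext x; simp [hA]
    have h2 : ‖A‖ < 1 := by
      have hd : HasFDerivAt ((fun x => N (p0, x))^[n]) A (u p0) := by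
        have e1 : HasFDerivAt M (fderiv ℝ M (p0, u p0)) (p0, u p0) :=
          ((hMs.differentiable (by simp)) (p0, u p0)).hasFDerivAt
        have e2 : HasFDerivAt (fun x : B => (p0, x)) (ContinuousLinearMap.inr ℝ P B) (u p0) :=
          hasFDerivAt_prodMk_right p0 (u p0)
        exact HasFDerivAt.comp (u p0) e1 e2
      have := hd.le_of_lipschitz hK.self_of_nhds
      exact lt_of_le_of_lt this (by exact_mod_cast hK1)
    rw [h1]
    exact ⟨ContinuousLinearEquiv.unitsEquiv ℝ B (Units.oneSub A h2), by ext x; simp⟩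
  have cdf : ContDiffAt ℝ ∞ f (p0, u p0) := hfs.contDiffAt
  have hne : (∞ : WithTop ℕ∞) ≠ 0 := by simp
  have h3 := cdf.contDiffAt_implicitFunction hne hinv
  have h4 := cdf.eventually_apply_implicitFunction hne hinv
  refine h3.congr_of_eventuallyEq ?_
  filter_upwards [h4, hK] with p hp hKp
  have h5 : f (p0, u p0) = 0 := by simp [hf, hMu]
  rw [h5] at hp
  have h6 : M (p, cdf.implicitFunction hne hinv p) = cdf.implicitFunction hne hinv p :=
    (sub_eq_zero.1 hp).symm
  have hc : ContractingWith K ((fun x => N (p, x))^[n]) := ⟨hK1, hKp⟩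
  exact hc.fixedPoint_unique' (hMu p) h6

abbrev I01 := Icc (0:ℝ) 1
abbrev B := C(I01, ℝ)

/-- Nemytskii operator of sine. -/
noncomputable def sinN (u : B) : B := ⟨fun s => Real.sin (u s), by fun_prop⟩

lemma sinN_smooth : ContDiff ℝ ∞ sinN := by
  let L : B →L[ℝ] C(I01, ℂ) := (Complex.I • Complex.ofRealCLM).compLeftContinuous ℝ I01
  let R : C(I01, ℂ) →L[ℝ] B := (Complex.imCLM).compLeftContinuous ℝ I01
  have h : sinN = fun u => R (NormedSpace.exp (L u)) := by
    funext u
    ext s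
    have h1 : (NormedSpace.exp (L u)) s = Complex.exp (Complex.I * u s) := by
      have := NormedSpace.map_exp (ContinuousMap.evalAlgHom ℂ ℂ s)
        (by exact continuous_eval_const s) (L u)
      rw [Complex.exp_eq_exp_ℂ]
      simpa [L] using this
    have h2 : R (NormedSpace.exp (L u)) s = ((NormedSpace.exp (L u)) s).im := rfl
    rw [h2, h1, mul_comm, Complex.exp_ofReal_mul_I_im]
    rfl
  rw [h]
  have he : ContDiff ℝ ∞ (NormedSpace.exp : C(I01, ℂ) → C(I01, ℂ)) := by
    rw [contDiff_iff_contDiffAt]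
    intro x
    exact (NormedSpace.exp_analytic (𝕂 := ℝ) x).contDiffAt
  exact R.contDiff.comp (he.comp L.contDiff)

lemma ext_cont (u : B) : Continuous (IccExtend (zero_le_one' ℝ) u) :=
  u.continuous.Icc_extend'

/-- Integration operator. -/
noncomputable def Kfun (u : B) : B :=
  ⟨fun s => ∫ σ in (0:ℝ)..s, IccExtend (zero_le_one' ℝ) u σ, by
    have : Continuous fun s : ℝ => ∫ σ in (0:ℝ)..s, IccExtend (zero_le_one' ℝ) u σ :=
      intervalIntegral.continuous_primitive (fun a b => (ext_cont u).intervalIntegrable a b) 0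
    exact this.comp continuous_subtype_val⟩

lemma Kfun_apply (u : B) (s : I01) :
    Kfun u s = ∫ σ in (0:ℝ)..s, IccExtend (zero_le_one' ℝ) u σ := rfl

lemma Kfun_bound (u : B) (c : ℝ) (n : ℕ) (h : ∀ s : I01, |u s| ≤ c * (s:ℝ) ^ n) (s : I01) :
    |Kfun u s| ≤ c * (s:ℝ) ^ (n+1) / (n+1) := by
  rw [Kfun_apply]
  have h0 := s.2.1
  have h1 := s.2.2
  have hb : ∀ σ ∈ Ioc (0:ℝ) s, ‖IccExtend (zero_le_one' ℝ) u σ‖ ≤ c * σ ^ n := by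
    intro σ hσ
    have : σ ∈ Icc (0:ℝ) 1 := ⟨hσ.1.le, hσ.2.trans h1⟩
    rw [IccExtend_of_mem _ _ this]
    exact h ⟨σ, this⟩
  have := intervalIntegral.norm_integral_le_of_norm_le (μ := MeasureTheory.volume) h0
    (Eventually.of_forall hb)
    ((by fun_prop : Continuous fun σ : ℝ => c * σ ^ n).intervalIntegrable _ _)
  rw [intervalIntegral.integral_const_mul, integral_pow] at this
  simp only [Real.norm_eq_abs] at this
  refine this.trans (le_of_eq ?_)
  simp
  ring

noncomputable def K : B →L[ℝ] B :=
  LinearMap.mkContinuous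
    { toFun := Kfun
      map_add' := by
        intro u w; ext s
        simp only [Kfun_apply, ContinuousMap.add_apply]
        rw [← intervalIntegral.integral_add ((ext_cont u).intervalIntegrable _ _)
          ((ext_cont w).intervalIntegrable _ _)]
        rfl
      map_smul' := by
        intro c u; ext s
        simp only [Kfun_apply, ContinuousMap.smul_apply, RingHom.id_apply]
        rw [← intervalIntegral.integral_smul]
        rfl } 1 (by
      intro u
      rw [ContinuousMap.norm_le _ (by positivity)]
      intro s
      have := Kfun_bound u ‖u‖ 0 (fun s => by simpa using u.norm_coe_le_norm s) s
      refine this.trans ?_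
      simp
      exact mul_le_of_le_one_right (norm_nonneg _) s.2.2)

lemma K_apply (u : B) (s : I01) : K u s = ∫ σ in (0:ℝ)..s, IccExtend (zero_le_one' ℝ) u σ := rfl

lemma K_bound (u : B) (c : ℝ) (n : ℕ) (h : ∀ s : I01, |u s| ≤ c * (s:ℝ) ^ n) (s : I01) :
    |K u s| ≤ c * (s:ℝ) ^ (n+1) / (n+1) := Kfun_bound u c n h s

noncomputable def idB : B := ⟨fun s => (s:ℝ), by fun_prop⟩
noncomputable def oneB : B := ⟨fun _ => (1:ℝ), by fun_prop⟩

noncomputable def N (q : (ℝ × ℝ × ℝ) × B) : B :=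
  q.1.2.1 • oneB + (q.1.1 * q.1.2.2) • idB - (q.1.1 ^ 2) • K (K (sinN q.2))

lemma N_apply (t a v : ℝ) (u : B) (s : I01) :
    N ((t, a, v), u) s = a + t * v * s - t ^ 2 * K (K (sinN u)) s := by
  simp [N, oneB, idB]

lemma N_smooth : ContDiff ℝ ∞ N := by
  have h1 : ContDiff ℝ ∞ (fun q : (ℝ × ℝ × ℝ) × B => K (K (sinN q.2))) :=
    K.contDiff.comp (K.contDiff.comp (sinN_smooth.comp contDiff_snd))
  unfold N
  fun_prop

lemma N_iter (p : ℝ × ℝ × ℝ) (u w : B) (n : ℕ) (s : I01) :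
    |((fun x => N (p, x))^[n] u) s - ((fun x => N (p, x))^[n] w) s| ≤
      ((p.1 ^ 2) ^ n / n.factorial * ‖u - w‖) * (s:ℝ) ^ n := by
  induction n generalizing s with
  | zero => simpa using (u - w).norm_coe_le_norm s
  | succ n ih =>
    obtain ⟨t, a, v⟩ := p
    rw [Function.iterate_succ_apply', Function.iterate_succ_apply']
    set U := (fun x => N ((t, a, v), x))^[n] u
    set W := (fun x => N ((t, a, v), x))^[n] w
    simp only [N_apply]
    set c := (t ^ 2) ^ n / n.factorial * ‖u - w‖ with hc
    have hcn : 0 ≤ c := by positivity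
    have h1 : ∀ s : I01, |(sinN U - sinN W) s| ≤ c * (s:ℝ) ^ n := by
      intro s
      refine le_trans ?_ (ih s)
      have := Real.abs_sin_sub_sin_le (U s) (W s)
      exact this
    have h2 := K_bound _ c n h1
    have h3 : ∀ s : I01, |K (sinN U - sinN W) s| ≤ (c / (n+1)) * (s:ℝ) ^ (n+1) := by
      intro s; refine (h2 s).trans (le_of_eq (by ring))
    have h4 := K_bound _ _ _ h3 s
    have h5 : a + t * v * s - t ^ 2 * K (K (sinN U)) s - (a + t * v * s - t ^ 2 * K (K (sinN W)) s)
        = - (t ^ 2 * K (K (sinN U - sinN W)) s) := by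
      rw [map_sub, map_sub]; simp; ring
    rw [h5, abs_neg, abs_mul, abs_of_nonneg (sq_nonneg t)]
    have hs0 := s.2.1
    have hs1 := s.2.2
    have h6 : (c / (n+1)) * (s:ℝ) ^ (n+1+1) / ((n+1:ℕ)+1) ≤ (c / (n+1)) * (s:ℝ) ^ (n+1) := by
      rw [div_le_iff₀ (by positivity), pow_succ, ← mul_assoc]
      apply mul_le_mul_of_nonneg_left _ (by positivity)
      push_cast
      have : (0:ℝ) ≤ n := by positivity
      linarith
    calc t ^ 2 * |K (K (sinN U - sinN W)) s| ≤ t ^ 2 * ((c / (n+1)) * (s:ℝ) ^ (n+1)) :=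
          mul_le_mul_of_nonneg_left (h4.trans h6) (sq_nonneg t)
      _ = _ := by
          rw [hc, Nat.factorial_succ]; push_cast; field_simp; ring_nf

lemma N_lip (R : ℝ) : ∃ n : ℕ, ∀ p : ℝ × ℝ × ℝ, |p.1| ≤ R →
    LipschitzWith (1/2) ((fun x => N (p, x))^[n]) := by
  have h := FloorSemiring.tendsto_pow_div_factorial_atTop (R ^ 2)
  obtain ⟨n, hn⟩ := (h.eventually (gt_mem_nhds (show (0:ℝ) < 1/2 by norm_num))).exists
  refine ⟨n, fun p hp => LipschitzWith.of_dist_le_mul fun u w => ?_⟩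
  rw [dist_eq_norm, ContinuousMap.norm_le _ (by positivity)]
  intro s
  refine (N_iter p u w n s).trans ?_
  have hs0 := s.2.1
  have hs1 : (s:ℝ) ^ n ≤ 1 := pow_le_one₀ s.2.1 s.2.2
  have h2 : (p.1 ^ 2) ^ n / n.factorial ≤ 1/2 := by
    refine le_trans ?_ hn.le
    have : p.1 ^ 2 ≤ R ^ 2 := sq_le_sq' (abs_le.1 hp).1 (abs_le.1 hp).2
    gcongr
  calc ((p.1 ^ 2) ^ n / n.factorial * ‖u - w‖) * (s:ℝ) ^ n
      ≤ ((p.1 ^ 2) ^ n / n.factorial * ‖u - w‖) * 1 := by gcongr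
    _ ≤ 1/2 * ‖u - w‖ := by rw [mul_one]; gcongr
    _ = _ := by rw [dist_eq_norm]; simp

lemma exists_unique_fix (p : ℝ × ℝ × ℝ) : ∃ u : B, N (p, u) = u ∧ ∀ w, N (p, w) = w → w = u := by
  obtain ⟨n, hn⟩ := N_lip |p.1|
  have hc : ContractingWith (1/2) ((fun x => N (p, x))^[n]) :=
    ⟨by rw [← NNReal.coe_lt_coe]; norm_num, hn p le_rfl⟩
  refine ⟨_, hc.isFixedPt_fixedPoint_iterate, fun w hw => ?_⟩
  exact hc.fixedPoint_unique (Function.iterate_fixed hw n)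

noncomputable def sol (p : ℝ × ℝ × ℝ) : B := (exists_unique_fix p).choose
lemma sol_fix (p) : N (p, sol p) = sol p := (exists_unique_fix p).choose_spec.1
lemma sol_uniq (p) (w) (hw : N (p, w) = w) : w = sol p := (exists_unique_fix p).choose_spec.2 w hw

lemma sol_smooth : ContDiff ℝ ∞ sol := by
  rw [contDiff_iff_contDiffAt]
  intro p0
  obtain ⟨n, hn⟩ := N_lip (|p0.1| + 1)
  refine fixed_smooth N N_smooth sol sol_fix p0 n (1/2)
    (by rw [← NNReal.coe_lt_coe]; norm_num) ?_
  have : ∀ᶠ p : ℝ × ℝ × ℝ in 𝓝 p0, |p.1| < |p0.1| + 1 :=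
    (continuous_abs.comp continuous_fst).continuousAt.eventually
      (gt_mem_nhds (by simp))
  filter_upwards [this] with p hp using hn p hp.le

def one01 : I01 := ⟨1, by simp⟩

noncomputable def X (p : ℝ × ℝ × ℝ) : ℝ := sol p one01
noncomputable def Y (p : ℝ × ℝ × ℝ) : ℝ := p.2.2 - p.1 * K (sinN (sol p)) one01

lemma X_smooth : ContDiff ℝ ∞ X :=
  (ContinuousMap.evalCLM ℝ one01 : B →L[ℝ] ℝ).contDiff.comp sol_smooth

lemma Y_smooth : ContDiff ℝ ∞ Y := by
  have : ContDiff ℝ ∞ (fun p => K (sinN (sol p)) one01) :=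
    (ContinuousMap.evalCLM ℝ one01 : B →L[ℝ] ℝ).contDiff.comp (K.contDiff.comp (sinN_smooth.comp sol_smooth))
  unfold Y
  fun_prop

/-- rescaling -/
noncomputable def resc (s : I01) (u : B) : B :=
  ⟨fun r => u ⟨s * r, mul_nonneg s.2.1 r.2.1, mul_le_one₀ s.2.2 r.2.1 r.2.2⟩, by fun_prop⟩

lemma K_resc (s : I01) (u : B) : (s:ℝ) • K (resc s u) = resc s (K u) := by
  ext r
  simp only [ContinuousMap.smul_apply, K_apply, smul_eq_mul]
  change _ = K u _
  rw [K_apply]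
  have h0 : ∫ σ in (0:ℝ)..r, IccExtend (zero_le_one' ℝ) (resc s u) σ
      = ∫ σ in (0:ℝ)..r, IccExtend (zero_le_one' ℝ) u (s * σ) := by
    apply intervalIntegral.integral_congr
    intro σ hσ
    rw [uIcc_of_le r.2.1] at hσ
    have h1 : σ ∈ Icc (0:ℝ) 1 := ⟨hσ.1, hσ.2.trans r.2.2⟩
    have h2 : (s:ℝ) * σ ∈ Icc (0:ℝ) 1 :=
      ⟨mul_nonneg s.2.1 h1.1, mul_le_one₀ s.2.2 h1.1 h1.2⟩
    simp only
    rw [IccExtend_of_mem _ _ h1, IccExtend_of_mem _ _ h2]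
    rfl
  rw [h0, intervalIntegral.mul_integral_comp_mul_left]
  simp

lemma sol_resc (t a v : ℝ) (s : I01) : resc s (sol (t, a, v)) = sol (t * s, a, v) := by
  apply sol_uniq
  have h1 : sinN (resc s (sol (t, a, v))) = resc s (sinN (sol (t, a, v))) := rfl
  have h2 : ((s:ℝ) ^ 2) • K (K (resc s (sinN (sol (t, a, v))))) =
      resc s (K (K (sinN (sol (t,a,v))))) := by
    rw [← K_resc s (K _), ← K_resc s (sinN _), map_smul, smul_smul]; ring_nf
  ext r
  rw [N_apply, h1]
  have h3 := congrArg (fun u : B => u r) h2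
  simp only [ContinuousMap.smul_apply, smul_eq_mul] at h3
  have h4 := congrArg (fun u : B => resc s u r) (sol_fix (t, a, v))
  rw [← h4]
  change _ = N ((t, a, v), _) _
  rw [N_apply]
  change _ = _ - t ^ 2 * (resc s (K (K (sinN (sol (t,a,v))))) r)
  rw [← h3]
  change _ = a + t * v * (s * r) - _
  ring

lemma X_resc (t a v : ℝ) (s : I01) : X (t * s, a, v) = sol (t, a, v) s := by
  unfold X
  rw [← sol_resc]
  change sol (t, a, v) _ = _
  congr 1
  ext; simp [one01]

lemma Y_resc (t a v : ℝ) (s : I01) : Y (t * s, a, v) = v - t * K (sinN (sol (t, a, v))) s := by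
  unfold Y
  rw [← sol_resc]
  have h1 : sinN (resc s (sol (t, a, v))) = resc s (sinN (sol (t, a, v))) := rfl
  have h2 := congrArg (fun u : B => u one01) (K_resc s (sinN (sol (t, a, v))))
  simp only [ContinuousMap.smul_apply, smul_eq_mul] at h2
  rw [h1, mul_assoc, h2]
  change v - t * K (sinN (sol (t, a, v))) _ = _
  congr 3
  ext; simp [one01]

lemma X_zero (a v : ℝ) : X (0, a, v) = a := by
  unfold X
  rw [← sol_fix, N_apply]; simp

lemma Y_zero (a v : ℝ) : Y (0, a, v) = v := by simp [Y]

lemma K_deriv (u : B) (s : ℝ) (hs : s ∈ Ioo (0:ℝ) 1) :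
    HasDerivAt (IccExtend (zero_le_one' ℝ) (K u)) (u ⟨s, hs.1.le, hs.2.le⟩) s := by
  have h := intervalIntegral.integral_hasDerivAt_right ((ext_cont u).intervalIntegrable 0 s)
    ((ext_cont u).stronglyMeasurableAtFilter _ _) (ext_cont u).continuousAt
  rw [IccExtend_of_mem _ _ ⟨hs.1.le, hs.2.le⟩] at h
  refine h.congr_of_eventuallyEq ?_
  filter_upwards [Ioo_mem_nhds hs.1 hs.2] with r hr
  rw [IccExtend_of_mem _ _ ⟨hr.1.le, hr.2.le⟩, K_apply]

lemma flow_ne (a v t : ℝ) (ht : t ≠ 0) :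
    HasDerivAt (fun t => X (t, a, v)) (Y (t, a, v)) t ∧
    HasDerivAt (fun t => Y (t, a, v)) (-Real.sin (X (t, a, v))) t := by
  set t0 := 2 * t with ht0
  have ht0' : t0 ≠ 0 := by positivity
  set u := sol (t0, a, v) with hu
  have hh : (1/2:ℝ) ∈ Ioo (0:ℝ) 1 := by constructor <;> norm_num
  have hev : ∀ᶠ r in 𝓝 t, r / t0 ∈ Ioo (0:ℝ) 1 := by
    have hc : ContinuousAt (fun r : ℝ => r / t0) t := by fun_prop
    apply hc.eventually
    apply Ioo_mem_nhds
    · rw [ht0]; field_simp; norm_num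
    · rw [ht0]; field_simp; norm_num
  have hdiv : t / t0 = 1/2 := by rw [ht0]; field_simp
  have hd : HasDerivAt (fun r : ℝ => r / t0) (1 / t0) t := (hasDerivAt_id t).div_const t0
  have key1 : ∀ r, (hr : r / t0 ∈ Ioo (0:ℝ) 1) → X (r, a, v) =
      a + r * v - t0 ^ 2 * IccExtend (zero_le_one' ℝ) (K (K (sinN u))) (r / t0) := by
    intro r hr
    have := X_resc t0 a v ⟨r / t0, hr.1.le, hr.2.le⟩
    simp only at this
    rw [mul_div_cancel₀ _ ht0'] at this
    rw [this, ← sol_fix, N_apply, IccExtend_of_mem _ _ ⟨hr.1.le, hr.2.le⟩]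
    simp only [← hu]
    field_simp
  have key2 : ∀ r, (hr : r / t0 ∈ Ioo (0:ℝ) 1) → Y (r, a, v) =
      v - t0 * IccExtend (zero_le_one' ℝ) (K (sinN u)) (r / t0) := by
    intro r hr
    have := Y_resc t0 a v ⟨r / t0, hr.1.le, hr.2.le⟩
    simp only at this
    rw [mul_div_cancel₀ _ ht0'] at this
    rw [this, IccExtend_of_mem _ _ ⟨hr.1.le, hr.2.le⟩]
  have ht1 := hev.self_of_nhds
  constructor
  · have h1 : HasDerivAt (fun r => IccExtend (zero_le_one' ℝ) (K (K (sinN u))) (r / t0))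
        (K (sinN u) ⟨t / t0, ht1.1.le, ht1.2.le⟩ * (1 / t0)) t :=
      by
      have := K_deriv (K (sinN u)) (t / t0) ht1
      exact HasDerivAt.comp t this hd
    have h2 : HasDerivAt (fun r => a + r * v - t0 ^ 2 *
        IccExtend (zero_le_one' ℝ) (K (K (sinN u))) (r / t0))
        (1 * v - t0 ^ 2 * (K (sinN u) ⟨t / t0, ht1.1.le, ht1.2.le⟩ * (1 / t0))) t :=
      (((hasDerivAt_id t).mul_const v).const_add a).sub (h1.const_mul _)
    rw [key2 t ht1, IccExtend_of_mem _ _ ⟨ht1.1.le, ht1.2.le⟩]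
    refine (h2.congr_of_eventuallyEq ?_).congr_deriv ?_
    · filter_upwards [hev] with r hr using key1 r hr
    · field_simp
  · have h1 : HasDerivAt (fun r => IccExtend (zero_le_one' ℝ) (K (sinN u)) (r / t0))
        (sinN u ⟨t / t0, ht1.1.le, ht1.2.le⟩ * (1 / t0)) t :=
      by
      have := K_deriv (sinN u) (t / t0) ht1
      exact HasDerivAt.comp t this hd
    have h2 := (h1.const_mul t0).const_sub v
    refine (h2.congr_of_eventuallyEq ?_).congr_deriv ?_
    · filter_upwards [hev] with r hr using key2 r hr
    · have := X_resc t0 a v ⟨t / t0, ht1.1.le, ht1.2.le⟩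
      simp only at this
      rw [mul_div_cancel₀ _ ht0'] at this
      rw [this]
      change -(t0 * (Real.sin (u _) * (1 / t0))) = _
      field_simp
      rw [hu]

lemma X_deriv (a v t : ℝ) : HasDerivAt (fun t => X (t, a, v)) (Y (t, a, v)) t := by
  have hX : Continuous (fun t => X (t, a, v)) := X_smooth.continuous.comp (by fun_prop)
  have hY : Continuous (fun t => Y (t, a, v)) := Y_smooth.continuous.comp (by fun_prop)
  exact hasDerivAt_of_hasDerivAt_of_ne' (x := 0) (fun y hy => (flow_ne a v y hy).1)
    hX.continuousAt hY.continuousAt t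

lemma Y_deriv (a v t : ℝ) :
    HasDerivAt (fun t => Y (t, a, v)) (-Real.sin (X (t, a, v))) t := by
  have hX : Continuous (fun t => X (t, a, v)) := X_smooth.continuous.comp (by fun_prop)
  have hY : Continuous (fun t => Y (t, a, v)) := Y_smooth.continuous.comp (by fun_prop)
  exact hasDerivAt_of_hasDerivAt_of_ne' (x := 0) (g := fun t => -Real.sin (X (t, a, v)))
    (fun y hy => (flow_ne a v y hy).2) hY.continuousAt
    (Real.continuous_sin.comp hX).neg.continuousAt t

end Pend
end

section
open Set Filter Topology
open scoped ContDiff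

namespace Pend

lemma mixed (f g : ℝ × ℝ × ℝ → ℝ) (hf : ContDiff ℝ ∞ f)
    (h : ∀ t a v, HasDerivAt (fun t => f (t, a, v)) (g (t, a, v)) t) (t a v : ℝ) :
    HasDerivAt (fun t => fderiv ℝ f (t, a, v) (0, 0, 1)) (fderiv ℝ g (t, a, v) (0, 0, 1)) t := by
  have hd : Differentiable ℝ f := hf.differentiable (by simp)
  have hc : ∀ t, HasDerivAt (fun t : ℝ => ((t, a, v) : ℝ × ℝ × ℝ)) (1, 0, 0) t := fun t =>
    (hasDerivAt_id t).prodMk (hasDerivAt_const t (a, v))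
  have hc' : ∀ t a v : ℝ, HasDerivAt (fun t : ℝ => ((t, a, v) : ℝ × ℝ × ℝ)) (1, 0, 0) t :=
    fun t a v => (hasDerivAt_id t).prodMk (hasDerivAt_const t (a, v))
  have hg : g = fun p => fderiv ℝ f p (1, 0, 0) := by
    funext ⟨t, a, v⟩
    exact (h t a v).unique ((hd (t, a, v)).hasFDerivAt.comp_hasDerivAt t (hc' t a v))
  have h2 : Differentiable ℝ (fderiv ℝ f) :=
    (hf.fderiv_right (m := 1) (by norm_cast)).differentiable (by simp)
  have e1 : HasDerivAt (fun t => fderiv ℝ f (t, a, v) (0, 0, 1))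
      (fderiv ℝ (fderiv ℝ f) (t, a, v) (1, 0, 0) (0, 0, 1)) t := by
    have := (h2 (t, a, v)).hasFDerivAt.comp_hasDerivAt t (hc t)
    have := this.clm_apply (hasDerivAt_const t ((0, 0, 1) : ℝ × ℝ × ℝ))
    simpa using this
  have e2 : fderiv ℝ g (t, a, v) (0, 0, 1)
      = fderiv ℝ (fderiv ℝ f) (t, a, v) (0, 0, 1) (1, 0, 0) := by
    rw [hg]
    have := ((h2 (t, a, v)).hasFDerivAt.clm_apply
      (hasFDerivAt_const ((1, 0, 0) : ℝ × ℝ × ℝ) (t, a, v))).fderiv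
    rw [this]; simp
  rw [e2]
  have hs : IsSymmSndFDerivAt ℝ f (t, a, v) := by
    apply ContDiffAt.isSymmSndFDerivAt (n := ∞) hf.contDiffAt
    simp; norm_cast
  rw [hs.eq]
  exact e1

structure Sys (x y J L : ℝ → ℝ) (a v : ℝ) : Prop where
  dx : ∀ t, HasDerivAt x (y t) t
  dy : ∀ t, HasDerivAt y (-Real.sin (x t)) t
  dJ : ∀ t, HasDerivAt J (L t) t
  dL : ∀ t, HasDerivAt L (-Real.cos (x t) * J t) t
  x0 : x 0 = a
  y0 : y 0 = v
  J0 : J 0 = 0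
  L0 : L 0 = 1

noncomputable def Jf (a v t : ℝ) : ℝ := fderiv ℝ X (t, a, v) (0, 0, 1)
noncomputable def Lf (a v t : ℝ) : ℝ := fderiv ℝ Y (t, a, v) (0, 0, 1)

lemma hcv (t a v : ℝ) : HasDerivAt (fun v : ℝ => ((t, a, v) : ℝ × ℝ × ℝ)) (0, 0, 1) v :=
    (hasDerivAt_const v t).prodMk ((hasDerivAt_const v a).prodMk (hasDerivAt_id v))

lemma X_dv (t a v : ℝ) : HasDerivAt (fun v => X (t, a, v)) (Jf a v t) v :=
  by
  have h := ((X_smooth.differentiable (by simp)) (t, a, v)).hasFDerivAt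
  exact h.comp_hasDerivAt v (hcv t a v)

lemma Y_dv (t a v : ℝ) : HasDerivAt (fun v => Y (t, a, v)) (Lf a v t) v :=
  by
  have h := ((Y_smooth.differentiable (by simp)) (t, a, v)).hasFDerivAt
  exact h.comp_hasDerivAt v (hcv t a v)

lemma sys (a v : ℝ) : Sys (fun t => X (t, a, v)) (fun t => Y (t, a, v)) (Jf a v) (Lf a v) a v where
  dx := X_deriv a v
  dy := Y_deriv a v
  dJ := fun t => mixed X Y X_smooth (fun t a v => X_deriv a v t) t a v
  dL := fun t => by
    have h := mixed Y (fun p => -Real.sin (X p)) Y_smooth (fun t a v => Y_deriv a v t) t a v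
    refine h.congr_deriv ?_
    have h1 := (((X_smooth.differentiable (by simp)) (t, a, v)).hasFDerivAt.sin).neg.fderiv
    have h2 : fderiv ℝ (fun p => -Real.sin (X p)) (t, a, v)
      = -(Real.cos (X (t, a, v)) • fderiv ℝ X (t, a, v)) := h1
    rw [h2]; simp [Jf]
  x0 := X_zero a v
  y0 := Y_zero a v
  J0 := by
    have h := X_dv 0 a v
    simp only [X_zero] at h
    exact h.unique (hasDerivAt_const v a)
  L0 := by
    have h := Y_dv 0 a v
    simp only [Y_zero] at h
    exact h.unique (hasDerivAt_id v)

lemma mono_of {f f' : ℝ → ℝ} {a b : ℝ} (h : ∀ t, HasDerivAt f (f' t) t)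
    (h0 : ∀ t ∈ Icc a b, 0 ≤ f' t) : MonotoneOn f (Icc a b) := by
  apply monotoneOn_of_deriv_nonneg (convex_Icc a b)
    (fun t _ => (h t).continuousAt.continuousWithinAt)
    (fun t _ => (h t).differentiableAt.differentiableWithinAt)
  intro t ht
  rw [(h t).deriv]
  exact h0 t (interior_subset ht)

lemma pos_of_ne {f : ℝ → ℝ} {a b : ℝ} (h : Continuous f) (h0 : ∀ t ∈ Icc a b, f t ≠ 0)
    (ha : 0 < f a) : ∀ t ∈ Icc a b, 0 < f t := by
  intro t ht
  by_contra hn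
  push Not at hn
  obtain ⟨s, hs, hs'⟩ := intermediate_value_Icc' ht.1 h.continuousOn ⟨hn, ha.le⟩
  exact h0 s ⟨hs.1, hs.2.trans ht.2⟩ hs'

lemma const_of {f : ℝ → ℝ} (h : ∀ t, HasDerivAt f 0 t) (t s : ℝ) : f t = f s :=
  is_const_of_deriv_eq_zero (fun t => (h t).differentiableAt) (fun t => (h t).deriv) t s

section
variable {x y J L : ℝ → ℝ} {a v : ℝ}

lemma Sys.energy (S : Sys x y J L a v) (t : ℝ) :
    y t ^ 2 / 2 - Real.cos (x t) = v ^ 2 / 2 - Real.cos a := by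
  have h : ∀ t, HasDerivAt (fun t => y t ^ 2 / 2 - Real.cos (x t)) 0 t := by
    intro t
    refine ((((S.dy t).pow 2).div_const 2).sub (S.dx t).cos).congr_deriv ?_
    simp; ring
  have := const_of h t 0
  simpa [S.x0, S.y0] using this

lemma Sys.wronsk (S : Sys x y J L a v) (t : ℝ) :
    L t * y t + J t * Real.sin (x t) = v := by
  have h : ∀ t, HasDerivAt (fun t => L t * y t + J t * Real.sin (x t)) 0 t := by
    intro t
    refine (((S.dL t).mul (S.dy t)).add ((S.dJ t).mul (S.dx t).sin)).congr_deriv ?_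
    ring
  have := const_of h t 0
  simpa [S.x0, S.y0, S.J0, S.L0] using this

lemma Sys.cx (S : Sys x y J L a v) : Continuous x :=
  continuous_iff_continuousAt.2 fun t => (S.dx t).continuousAt
lemma Sys.cy (S : Sys x y J L a v) : Continuous y :=
  continuous_iff_continuousAt.2 fun t => (S.dy t).continuousAt
lemma Sys.cJ (S : Sys x y J L a v) : Continuous J :=
  continuous_iff_continuousAt.2 fun t => (S.dJ t).continuousAt

/-- While the velocity is positive the Jacobi field is positive. -/
lemma Sys.J_pos_rising (S : Sys x y J L a v) {T : ℝ} (hT : 0 < T)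
    (hy : ∀ t ∈ Icc 0 T, 0 < y t) : 0 < J T := by
  have hv : 0 < v := by have := hy 0 ⟨le_rfl, hT.le⟩; rwa [S.y0] at this
  have hm : StrictMonoOn (fun t => J t / y t) (Icc 0 T) := by
    apply strictMonoOn_of_deriv_pos (convex_Icc 0 T)
    · intro t ht
      exact (S.cJ.continuousAt.div S.cy.continuousAt (hy t ht).ne').continuousWithinAt
    · intro t ht
      have ht := hy t (interior_subset ht)
      have hd : HasDerivAt (fun t => J t / y t) _ t := (S.dJ t).div (S.dy t) ht.ne'
      rw [hd.deriv]
      have := S.wronsk t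
      have h2 : L t * y t - J t * -Real.sin (x t) = v := by linarith
      rw [h2]; positivity
  have h := hm ⟨le_rfl, hT.le⟩ ⟨hT.le, le_rfl⟩ hT
  simp only [S.J0, zero_div] at h
  have hyT := hy T ⟨hT.le, le_rfl⟩
  exact (div_pos_iff_of_pos_right hyT).1 h

lemma cos_one_gt : (0.53:ℝ) < Real.cos 1 := by
  have h1 := abs_le.1 (Real.cos_bound (x := 1/4) (by rw [abs_of_pos] <;> norm_num))
  have h2 : (0.9685:ℝ) ≤ Real.cos (1/4) := by
    have := h1.1
    rw [abs_of_pos (by norm_num : (0:ℝ) < 1/4)] at this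
    norm_num at this ⊢
    linarith
  have h3 : Real.cos (1/2) = 2 * Real.cos (1/4) ^ 2 - 1 := by
    rw [← Real.cos_two_mul]; norm_num
  have h4 : Real.cos 1 = 2 * Real.cos (1/2) ^ 2 - 1 := by
    rw [← Real.cos_two_mul]; norm_num
  have h5 : (0.8759:ℝ) ≤ Real.cos (1/2) := by rw [h3]; nlinarith
  rw [h4]; nlinarith

/-- Key numeric inequality. -/
lemma numeric (z : ℝ) (h0 : 0 ≤ z) (h1 : z ≤ Real.pi / 2) :
    Real.cos z * (0.16 + 0.21 * (Real.pi * z - z ^ 2)) ≤ 0.84 * 0.53 := by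
  have hpi := Real.pi_lt_d2
  have hpi' := Real.pi_gt_d2
  have hc : 0 ≤ Real.cos z := Real.cos_nonneg_of_mem_Icc ⟨by linarith, h1⟩
  have hpz : Real.pi * z ≤ 3.15 * z := by nlinarith
  rcases le_total z 1 with hz | hz
  · have hb := (abs_le.1 (Real.cos_bound (x := z) (by rw [abs_of_nonneg h0]; exact hz))).2
    rw [abs_of_nonneg h0] at hb
    have hb' : Real.cos z ≤ 1 - z ^ 2 / 2 + z ^ 4 * (5/96) := by linarith
    have hq : 0 ≤ 0.16 + 0.21 * (3.15 * z - z ^ 2) := by nlinarith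
    calc Real.cos z * (0.16 + 0.21 * (Real.pi * z - z ^ 2))
        ≤ Real.cos z * (0.16 + 0.21 * (3.15 * z - z ^ 2)) := by gcongr
      _ ≤ (1 - z ^ 2 / 2 + z ^ 4 * (5/96)) * (0.16 + 0.21 * (3.15 * z - z ^ 2)) := by gcongr
      _ ≤ 0.84 * 0.53 := by
        have h4 : z ^ 4 ≤ z ^ 2 := by nlinarith [sq_nonneg z, mul_nonneg (sq_nonneg z) (sub_nonneg.2 hz), mul_nonneg (mul_nonneg (sq_nonneg z) (sub_nonneg.2 hz)) h0]
        have hA : 1 - z ^ 2 / 2 + z ^ 4 * (5/96) ≤ 1.19 - 0.582 * z := by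
          nlinarith [sq_nonneg (z - 0.65)]
        have hB : 0.16 + 0.21 * (3.15 * z - z ^ 2) ≤ 0.249 + 0.389 * z := by
          nlinarith [sq_nonneg (z - 0.65)]
        calc (1 - z ^ 2 / 2 + z ^ 4 * (5/96)) * (0.16 + 0.21 * (3.15 * z - z ^ 2))
            ≤ (1.19 - 0.582 * z) * (0.249 + 0.389 * z) := by
              apply mul_le_mul hA hB hq; linarith
          _ ≤ 0.84 * 0.53 := by nlinarith [sq_nonneg (z - 0.7)]
  · have hb : Real.cos z ≤ Real.pi / 2 - z := by
      rw [← Real.sin_pi_div_two_sub]; exact Real.sin_le (by linarith)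
    have hq : 0.16 + 0.21 * (Real.pi * z - z ^ 2) ≤ 0.7 := by nlinarith [sq_nonneg (z - Real.pi / 2)]
    calc Real.cos z * (0.16 + 0.21 * (Real.pi * z - z ^ 2))
        ≤ Real.cos z * 0.7 := by gcongr
      _ ≤ 0.58 * 0.7 := by gcongr; linarith
      _ ≤ _ := by norm_num

/-- First phase: up to the time where `x = π/2`. -/
lemma Sys.phase1 (S : Sys x y J L a v) (ha : |a| ≤ 1) (hv : 0 < v)
    (he : Real.cos 1 < v ^ 2 / 2 - Real.cos a) {τ : ℝ} (hτ : 0 < τ) (hx : x τ = Real.pi / 2)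
    (hxs : ∀ t ∈ Icc 0 τ, a ≤ x t ∧ x t ≤ Real.pi / 2) : 0 < J τ ∧ 0 < L τ := by
  obtain ⟨ha1, ha2⟩ := abs_le.1 ha
  have hpi := Real.pi_lt_d2
  have hpi' := Real.pi_gt_d2
  have hk := cos_one_gt
  set e := v ^ 2 / 2 - Real.cos a with hedef
  have hcos : ∀ t ∈ Icc 0 τ, 0 ≤ Real.cos (x t) := fun t ht =>
    Real.cos_nonneg_of_mem_Icc ⟨by linarith [(hxs t ht).1], (hxs t ht).2⟩
  have hen : ∀ t, y t ^ 2 = 2 * (e + Real.cos (x t)) := fun t => by linarith [S.energy t]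
  have hy : ∀ t ∈ Icc 0 τ, 0 < y t := by
    apply pos_of_ne S.cy _ (by rw [S.y0]; exact hv)
    intro t ht h0
    have := hen t
    rw [h0] at this
    linarith [hcos t ht]
  have hJ : ∀ t ∈ Ioc 0 τ, 0 < J t := fun t ht =>
    S.J_pos_rising ht.1 fun s hs => hy s ⟨hs.1, hs.2.trans ht.2⟩
  have hJ' : ∀ t ∈ Icc 0 τ, 0 ≤ J t := by
    intro t ht
    rcases ht.1.eq_or_lt with h | h
    · rw [← h, S.J0]
    · exact (hJ t ⟨h, ht.2⟩).le
  have hmono : MonotoneOn x (Icc 0 τ) := mono_of S.dx fun t ht => (hy t ht).le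
  set Q : ℝ → ℝ := fun t => L t * (1 + 0.21 * (Real.pi * x t - x t ^ 2)) -
    J t * (0.21 * (Real.pi - 2 * x t)) * y t with hQ
  -- a good starting time
  obtain ⟨σ, hσ, hxσ, hQσ⟩ : ∃ σ ∈ Icc 0 τ, 0 ≤ x σ ∧ 0 < Q σ := by
    rcases le_or_gt 0 a with h | h
    · refine ⟨0, ⟨le_rfl, hτ.le⟩, by rw [S.x0]; exact h, ?_⟩
      simp only [hQ, S.x0, S.J0, S.L0]
      nlinarith
    · obtain ⟨σ, hσ, hσ'⟩ := intermediate_value_Icc hτ.le S.cx.continuousOn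
        (show (0:ℝ) ∈ Icc (x 0) (x τ) by rw [S.x0, hx]; constructor <;> linarith)
      have hsub : Icc 0 σ ⊆ Icc 0 τ := Icc_subset_Icc_right hσ.2
      have hxneg : ∀ t ∈ Icc 0 σ, x t ≤ 0 := fun t ht => by
        rw [← hσ']; exact hmono (hsub ht) hσ ht.2
      have hyv : ∀ t ∈ Icc 0 σ, v ≤ y t := by
        have : MonotoneOn y (Icc 0 σ) := mono_of S.dy fun t ht => by
          have := Real.sin_nonpos_of_nonpos_of_neg_pi_le (hxneg t ht)
            (by linarith [(hxs t (hsub ht)).1])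
          linarith
        intro t ht
        have := this ⟨le_rfl, hσ.1⟩ ht ht.1
        rwa [S.y0] at this
      have hσv : σ * v ≤ 1 := by
        have : MonotoneOn (fun t => x t - v * t) (Icc 0 σ) :=
          mono_of (fun t => (S.dx t).sub ((hasDerivAt_id t).const_mul v)) fun t ht => by
            have := hyv t ht
            simp; linarith
        have := this ⟨le_rfl, hσ.1⟩ ⟨hσ.1, le_rfl⟩ hσ.1
        simp only [S.x0, hσ'] at this
        linarith
      have hL : ∀ t ∈ Icc 0 σ, L t ≤ 1 := by
        have : MonotoneOn (fun t => - L t) (Icc 0 σ) :=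
          mono_of (fun t => (S.dL t).neg) fun t ht => by
            have := mul_nonneg (hcos t (hsub ht)) (hJ' t (hsub ht))
            linarith
        intro t ht
        have := this ⟨le_rfl, hσ.1⟩ ht ht.1
        simp only [S.L0] at this
        linarith
      have hJσ : J σ ≤ σ := by
        have : MonotoneOn (fun t => t - J t) (Icc 0 σ) :=
          mono_of (fun t => (hasDerivAt_id t).sub (S.dJ t)) fun t ht => by
            have := hL t ht
            linarith
        have := this ⟨le_rfl, hσ.1⟩ ⟨hσ.1, le_rfl⟩ hσ.1
        simp only [S.J0] at this
        linarith
      refine ⟨σ, hσ, hσ'.ge, ?_⟩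
      have hw := S.wronsk σ
      have hyσ := hy σ hσ
      have heσ := hen σ
      rw [hσ'] at hw heσ
      simp only [hQ, hσ']
      rw [Real.sin_zero] at hw
      rw [Real.cos_zero] at heσ
      have hLy : L σ * y σ = v := by linarith
      have hca : Real.cos 1 ≤ Real.cos a := by
        rw [← Real.cos_abs a]
        exact Real.cos_le_cos_of_nonneg_of_le_pi (abs_nonneg a) (by linarith) ha
      have hv2 : v ^ 2 = 2 * (e + Real.cos a) := by rw [hedef]; ring
      have hJ0 := hJ' σ hσ
      -- multiply by v * y
      have hmain : 0 < (L σ - J σ * (0.21 * Real.pi) * y σ) * (y σ * v) := by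
        have e1 : (L σ - J σ * (0.21 * Real.pi) * y σ) * (y σ * v)
          = v ^ 2 - (J σ * v) * (0.21 * Real.pi) * y σ ^ 2 := by
          rw [← hLy]; ring
        rw [e1]
        have e2 : J σ * v ≤ 1 := le_trans (by gcongr) hσv
        have e3 : 0 ≤ J σ * v := by positivity
        have e4 : (J σ * v) * (0.21 * Real.pi) ≤ 0.6615 := by nlinarith
        have e5 : (J σ * v) * (0.21 * Real.pi) * y σ ^ 2 ≤ 0.6615 * y σ ^ 2 := by gcongr
        nlinarith
      have := pos_of_mul_pos_left hmain (by positivity)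
      ring_nf at this ⊢
      linarith
  have hsub : Icc σ τ ⊆ Icc 0 τ := Icc_subset_Icc_left hσ.1
  have hQm : MonotoneOn Q (Icc σ τ) := by
    have hd : ∀ t, HasDerivAt Q (-J t * (Real.cos (x t) * (1 + 0.21 * (Real.pi * x t - x t ^ 2))
        - 0.42 * y t ^ 2 - 0.21 * (Real.pi - 2 * x t) * Real.sin (x t))) t := by
      intro t
      have h1 := (S.dL t).mul (((((S.dx t).const_mul Real.pi).sub ((S.dx t).pow 2)).const_mul
        0.21).const_add 1)
      have h2 := ((S.dJ t).mul (((((S.dx t).const_mul 2).const_sub Real.pi)).const_mul 0.21)).mul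
        (S.dy t)
      refine (h1.sub h2).congr_deriv ?_
      simp; ring
    apply mono_of hd
    intro t ht
    have ht' := hsub ht
    have hx0 : 0 ≤ x t := hxσ.trans (hmono hσ ht' ht.1)
    have hx1 := (hxs t ht').2
    have hn := numeric (x t) hx0 hx1
    have hs : 0 ≤ Real.sin (x t) := Real.sin_nonneg_of_nonneg_of_le_pi hx0 (by linarith)
    have h3 : 0 ≤ 0.21 * (Real.pi - 2 * x t) * Real.sin (x t) :=
      mul_nonneg (by linarith) hs
    have h4 : Real.cos (x t) * (1 + 0.21 * (Real.pi * x t - x t ^ 2))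
        - 0.42 * y t ^ 2 - 0.21 * (Real.pi - 2 * x t) * Real.sin (x t) ≤ 0 := by
      rw [hen t]
      nlinarith
    nlinarith [hJ' t ht']
  have hfin := hQm ⟨le_rfl, hσ.2⟩ ⟨hσ.2, le_rfl⟩ hσ.2
  have hQτ : 0 < Q τ := lt_of_lt_of_le hQσ hfin
  refine ⟨hJ τ ⟨hτ, le_rfl⟩, ?_⟩
  simp only [hQ, hx] at hQτ
  have : 0 < L τ * (1 + 0.21 * (Real.pi * (Real.pi / 2) - (Real.pi / 2) ^ 2)) := by
    ring_nf at hQτ ⊢; linarith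
  exact pos_of_mul_pos_left this (by nlinarith)

/-- Oscillating case. -/
lemma Sys.J_pos_osc (S : Sys x y J L a v) (ha : |a| ≤ 1) (hv : 0 < v)
    (he : Real.cos 1 < v ^ 2 / 2 - Real.cos a) {T : ℝ} (hT : 0 < T)
    (hxs : ∀ t ∈ Icc 0 T, a ≤ x t ∧ x t ≤ Real.pi) (hxT : Real.pi / 2 < x T) : 0 < J T := by
  obtain ⟨ha1, ha2⟩ := abs_le.1 ha
  have hpi := Real.pi_lt_d2
  have hpi' := Real.pi_gt_d2
  have hk := cos_one_gt
  -- first hitting time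
  set A : Set ℝ := {t ∈ Icc 0 T | Real.pi / 2 ≤ x t} with hA
  have hAc : IsCompact A :=
    isCompact_Icc.inter_right (isClosed_le continuous_const S.cx)
  obtain ⟨τ, hτ⟩ := hAc.exists_isLeast ⟨T, ⟨hT.le, le_rfl⟩, hxT.le⟩
  have hτ0 : 0 < τ := by
    rcases hτ.1.1.1.eq_or_lt with h | h
    · have := hτ.1.2
      rw [← h, S.x0] at this; linarith
    · exact h
  have hlt : ∀ t ∈ Ico 0 τ, x t < Real.pi / 2 := by
    intro t ht
    by_contra hn
    push Not at hn
    exact absurd (hτ.2 ⟨⟨ht.1, ht.2.le.trans hτ.1.1.2⟩, hn⟩) (not_le.2 ht.2)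
  have hxτ : x τ = Real.pi / 2 := by
    apply le_antisymm _ hτ.1.2
    have : τ ∈ closure (Ico 0 τ) := by
      rw [closure_Ico hτ0.ne]; exact ⟨hτ0.le, le_rfl⟩
    exact closure_minimal (fun t ht => (hlt t ht).le) (isClosed_le S.cx continuous_const) this
  obtain ⟨hJτ, hLτ⟩ := S.phase1 ha hv he hτ0 hxτ fun t ht =>
    ⟨(hxs t ⟨ht.1, ht.2.trans hτ.1.1.2⟩).1, by
      rcases ht.2.eq_or_lt with h | h
      · rw [h, hxτ]
      · exact (hlt t ⟨ht.1, h⟩).le⟩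
  have hτT := hτ.1.1.2
  have hsub : Icc τ T ⊆ Icc 0 T := Icc_subset_Icc_left hτ0.le
  -- afterwards x ≥ π/2
  have hge : ∀ t ∈ Icc τ T, Real.pi / 2 ≤ x t := by
    obtain ⟨m, hm, hmin⟩ := isCompact_Icc.exists_isMinOn ⟨τ, le_rfl, hτT⟩
      (S.cx.continuousOn (s := Icc τ T))
    by_contra hn
    push Not at hn
    obtain ⟨r, hr, hr'⟩ := hn
    have hxm : x m < Real.pi / 2 := lt_of_le_of_lt (hmin hr) hr'
    have hm1 : τ < m := lt_of_le_of_ne hm.1 fun h => by rw [← h, hxτ] at hxm; exact lt_irrefl _ hxm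
    have hm2 : m < T := lt_of_le_of_ne hm.2 fun h => by rw [h] at hxm; linarith
    have hloc : IsLocalMin x m := hmin.isLocalMin (Icc_mem_nhds hm1 hm2)
    have hy0 := hloc.hasDerivAt_eq_zero (S.dx m)
    have hen := S.energy m
    have : 0 ≤ Real.cos (x m) :=
      Real.cos_nonneg_of_mem_Icc ⟨by linarith [(hxs m (hsub hm)).1], hxm.le⟩
    rw [hy0] at hen
    linarith
  have hmono : MonotoneOn (fun t => J t * L t) (Icc τ T) := by
    apply mono_of (fun t => (S.dJ t).mul (S.dL t))
    intro t ht
    have : Real.cos (x t) ≤ 0 :=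
      Real.cos_nonpos_of_pi_div_two_le_of_le (hge t ht) (by linarith [(hxs t (hsub ht)).2])
    nlinarith [mul_self_nonneg (L t), mul_self_nonneg (J t)]
  refine pos_of_ne S.cJ ?_ hJτ T ⟨hτT, le_rfl⟩
  intro t ht h0
  have h1 := hmono ⟨le_rfl, hτT⟩ ht ht.1
  simp only [h0, zero_mul] at h1
  have := mul_pos hJτ hLτ
  linarith
end
end Pend
end

section
open Set Filter Topology
open scoped ContDiff
namespace Pend

lemma field_lip : LipschitzWith 1 (fun p : ℝ × ℝ => ((p.2, -Real.sin p.1) : ℝ × ℝ)) := by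
  have h1 : LipschitzWith 1 (fun p : ℝ × ℝ => p.2) := LipschitzWith.prod_snd
  have h2 : LipschitzWith 1 (fun p : ℝ × ℝ => -Real.sin p.1) := by
    apply LipschitzWith.of_dist_le_mul
    intro p q
    have h := Real.lipschitzWith_sin.dist_le_mul p.1 q.1
    rw [dist_neg_neg]
    refine h.trans ?_
    gcongr
    rw [Prod.dist_eq]; exact le_max_left _ _
  simpa using h1.prodMk h2

section
variable {x y J L : ℝ → ℝ} {a v : ℝ}

/-- Solutions through an equilibrium are constant. -/
lemma Sys.equil (S : Sys x y J L a v) {s : ℝ} (h1 : y s = 0) (h2 : Real.sin (x s) = 0) : v = 0 := by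
  have h := ODE_solution_unique_univ (v := fun _ (p : ℝ × ℝ) => ((p.2, -Real.sin p.1) : ℝ × ℝ))
    (K := 1) (s := fun _ => univ) (f := fun t => (x t, y t)) (g := fun _ => (x s, 0)) (t₀ := s)
    (fun _ => field_lip.lipschitzOnWith) (fun t => ⟨(S.dx t).prodMk (S.dy t), trivial⟩)
    (fun t => ⟨by simpa only [h2, neg_zero, Prod.mk_zero_zero] using hasDerivAt_const t ((x s, 0) : ℝ × ℝ), trivial⟩) (by simp [h1])
  have h0 := congrArg Prod.snd (congrFun h 0)
  simpa [S.y0] using h0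

lemma Sys.rise (S : Sys x y J L a v) (hv : 0 < v) (he : 1 ≤ v ^ 2 / 2 - Real.cos a) {T : ℝ} :
    ∀ t ∈ Icc 0 T, 0 < y t := by
  apply pos_of_ne S.cy _ (by rw [S.y0]; exact hv)
  intro t _ h
  have hE := S.energy t
  rw [h] at hE
  have hc := Real.neg_one_le_cos (x t)
  have hc1 : Real.cos (x t) = -1 := by linarith
  have hs : Real.sin (x t) = 0 := by
    have := Real.sin_sq_add_cos_sq (x t)
    rw [hc1] at this
    have h3 : Real.sin (x t) ^ 2 = 0 := by linarith
    exact pow_eq_zero_iff (two_ne_zero) |>.1 h3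
  exact hv.ne' (S.equil h hs)

lemma Sys.below (S : Sys x y J L a v) (ha : |a| ≤ 1) (he : v ^ 2 / 2 - Real.cos a < 1) {T : ℝ} :
    ∀ t ∈ Icc 0 T, x t < Real.pi := by
  have h := pos_of_ne (f := fun t => Real.pi - x t) (a := 0) (b := T) (continuous_const.sub S.cx) ?_ ?_
  · intro t ht; linarith [h t ht]
  · intro t _ h
    have hx : x t = Real.pi := by linarith
    have hE := S.energy t
    rw [hx, Real.cos_pi] at hE
    nlinarith [sq_nonneg (y t)]
  · have := Real.pi_gt_d2
    have := (abs_le.1 ha).2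
    simp only [S.x0]; linarith

lemma Sys.lower (S : Sys x y J L a v) {t : ℝ} (ht : 0 ≤ t) : a + v * t - t ^ 2 / 2 ≤ x t := by
  have hy : ∀ s ∈ Icc 0 t, 0 ≤ y s - (v - s) := by
    intro s hs
    have h : MonotoneOn (fun s => y s - (v - s)) (Icc 0 t) :=
      mono_of (f' := fun s => -Real.sin (x s) - (0 - 1))
        (fun s => (S.dy s).sub ((hasDerivAt_const s v).sub (hasDerivAt_id s)))
        (fun s _ => by linarith [Real.sin_le_one (x s)])
    have := h ⟨le_rfl, ht⟩ hs hs.1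
    simp only [S.y0] at this; linarith
  have h : MonotoneOn (fun s => x s - (v * s - s ^ 2 / 2)) (Icc 0 t) :=
    mono_of (f' := fun s => y s - (v * 1 - (2 * s) / 2))
      (fun s => (S.dx s).sub (((hasDerivAt_id s).const_mul v).sub
        (((hasDerivAt_pow 2 s).congr_deriv (by simp)).div_const 2)))
      (fun s hs => by linarith [hy s hs])
  have := h ⟨le_rfl, ht⟩ ⟨ht, le_rfl⟩ ht
  simp only [S.x0] at this; linarith
end

def D (T a β v : ℝ) : Prop :=
  0 ≤ v ∧ (∀ t ∈ Icc 0 T, a ≤ X (t, a, v)) ∧ β ≤ X (T, a, v)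

section
variable {T a β v : ℝ}

lemma beta_bd (hβ : |β - Real.pi| < 1) : 2.1 < β := by
  have := Real.pi_gt_d2
  have := (abs_lt.1 hβ).1
  linarith

lemma D_energy (hT : 0 < T) (ha : |a| ≤ 1) (hβ : |β - Real.pi| < 1) (h : D T a β v) :
    Real.cos 1 < v ^ 2 / 2 - Real.cos a ∧ 1 < v := by
  have S := sys a v
  have hb := beta_bd hβ
  have ha2 := (abs_le.1 ha).2
  have hpi := Real.pi_gt_d2
  obtain ⟨t, -, ht⟩ := intermediate_value_Icc hT.le S.cx.continuousOn
    (⟨by simp only [S.x0]; linarith, h.2.2⟩ : β ∈ Icc (X (0, a, v)) (X (T, a, v)))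
  have hE := S.energy t
  simp only at hE ht
  rw [ht] at hE
  have hc : Real.cos 1 < - Real.cos β := by
    rw [← Real.cos_sub_pi, ← Real.cos_abs (β - Real.pi)]
    exact Real.strictAntiOn_cos ⟨abs_nonneg _, by linarith⟩ ⟨by norm_num, by linarith⟩ hβ
  have hc2 : Real.cos 1 ≤ Real.cos a := by
    rw [← Real.cos_abs a]
    exact Real.strictAntiOn_cos.antitoneOn ⟨abs_nonneg _, by linarith⟩ ⟨by norm_num, by linarith⟩ ha
  have he : Real.cos 1 < v ^ 2 / 2 - Real.cos a := by nlinarith [sq_nonneg (Y (t, a, v))]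
  refine ⟨he, ?_⟩
  have := cos_one_gt
  by_contra hn
  push Not at hn
  nlinarith [h.1]

lemma D_J (hT : 0 < T) (ha : |a| ≤ 1) (hβ : |β - Real.pi| < 1) (h : D T a β v) :
    0 < Jf a v T := by
  have S := sys a v
  obtain ⟨he, hv⟩ := D_energy hT ha hβ h
  have hb := beta_bd hβ
  have := Real.pi_lt_d2
  rcases le_or_gt 1 (v ^ 2 / 2 - Real.cos a) with h1 | h1
  · exact S.J_pos_rising hT (S.rise (by linarith) h1)
  · refine S.J_pos_osc ha (by linarith) he hT (fun t ht => ⟨h.2.1 t ht, (S.below ha h1 t ht).le⟩) ?_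
    have := h.2.2
    linarith

lemma D_strict (hT : 0 < T) (ha : |a| ≤ 1) (hβ : |β - Real.pi| < 1) (h : D T a β v) :
    ∀ t ∈ Ioc 0 T, a < X (t, a, v) := by
  have S := sys a v
  obtain ⟨he, hv⟩ := D_energy hT ha hβ h
  have hb := beta_bd hβ
  have ha2 := (abs_le.1 ha).2
  intro t ht
  rcases eq_or_lt_of_le ht.2 with h1 | h1
  · rw [h1]; linarith [h.2.2]
  refine lt_of_le_of_ne (h.2.1 t ⟨ht.1.le, ht.2⟩) fun heq => ?_
  have hm : IsLocalMin (fun t => X (t, a, v)) t := by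
    filter_upwards [Icc_mem_nhds ht.1 h1] with s hs
    simp only [← heq]; exact h.2.1 s hs
  have h0 := hm.hasDerivAt_eq_zero (S.dx t)
  have hE := S.energy t
  rw [h0, ← heq] at hE
  nlinarith

lemma open_lemma {T0 a0 v0 : ℝ} (hT0 : 0 < T0) (hv0 : 1 < v0)
    (h : ∀ t ∈ Ioc 0 T0, a0 < X (t, a0, v0)) :
    ∀ᶠ q : ℝ × ℝ × ℝ in 𝓝 (T0, a0, v0), ∀ t ∈ Icc 0 q.1, q.2.1 ≤ X (t, q.2.1, q.2.2) := by
  have hX := X_smooth.continuous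
  have hK : ∀ᶠ q : ℝ × ℝ × ℝ in 𝓝 (T0, a0, v0), ∀ s ∈ Icc (1 / (T0 + 1)) 1,
      q.2.1 < X (s * q.1, q.2.1, q.2.2) := by
    apply isCompact_Icc.eventually_forall_of_forall_eventually
    intro s hs
    have hs0 : 0 < s := lt_of_lt_of_le (by positivity) hs.1
    have hf : Continuous fun z : (ℝ × ℝ × ℝ) × ℝ => z.1.2.1 := by fun_prop
    have hg : Continuous fun z : (ℝ × ℝ × ℝ) × ℝ => X (z.2 * z.1.1, z.1.2.1, z.1.2.2) := by fun_prop
    exact hf.continuousAt.eventually_lt hg.continuousAt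
      (h (s * T0) ⟨by positivity, by nlinarith [hs.2]⟩)
  have e1 : ∀ᶠ q : ℝ × ℝ × ℝ in 𝓝 (T0, a0, v0), q.1 < T0 + 1 :=
    continuous_fst.continuousAt.eventually_lt continuousAt_const (by simp)
  have e2 : ∀ᶠ q : ℝ × ℝ × ℝ in 𝓝 (T0, a0, v0), 0 < q.1 :=
    continuousAt_const.eventually_lt continuous_fst.continuousAt (by simpa)
  have e3 : ∀ᶠ q : ℝ × ℝ × ℝ in 𝓝 (T0, a0, v0), 1 < q.2.2 :=
    continuousAt_const.eventually_lt (by fun_prop) (by simpa)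
  filter_upwards [hK, e1, e2, e3] with q hq h1 h2 h3 t ht
  rcases le_or_gt t 1 with h4 | h4
  · have := (sys q.2.1 q.2.2).lower ht.1
    have h5 : t ^ 2 / 2 ≤ q.2.2 * t := by nlinarith [ht.1]
    linarith
  · have := hq (t / q.1) ⟨by rw [div_le_div_iff₀ (by positivity) h2]; nlinarith,
      by rw [div_le_one h2]; exact ht.2⟩
    rw [div_mul_cancel₀ _ h2.ne'] at this
    exact this.le

lemma open_v (hT : 0 < T) (ha : |a| ≤ 1) (hβ : |β - Real.pi| < 1) (h : D T a β v) :
    ∀ᶠ w in 𝓝 v, 0 ≤ w ∧ ∀ t ∈ Icc 0 T, a ≤ X (t, a, w) := by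
  have hv := (D_energy hT ha hβ h).2
  have h1 := open_lemma hT hv (D_strict hT ha hβ h)
  have hc : ContinuousAt (fun w : ℝ => ((T, a, w) : ℝ × ℝ × ℝ)) v := by fun_prop
  have h2 := hc.eventually h1
  have h3 : ∀ᶠ w in 𝓝 v, 0 ≤ w := by
    filter_upwards [lt_mem_nhds (show (0:ℝ) < v by linarith)] with w hw using hw.le
  exact h3.and h2

lemma D_closed : IsClosed {v | D T a β v} := by
  have hX := X_smooth.continuous
  have h : {v | D T a β v} = {v | 0 ≤ v} ∩ (⋂ t ∈ Icc 0 T, {v | a ≤ X (t, a, v)}) ∩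
      {v | β ≤ X (T, a, v)} := by
    ext v; simp [D, and_assoc]
  rw [h]
  refine (isClosed_le continuous_const continuous_id).inter ?_ |>.inter ?_
  · exact isClosed_biInter fun t _ => isClosed_le continuous_const (by fun_prop)
  · exact isClosed_le continuous_const (by fun_prop)

lemma D_up (hT : 0 < T) (ha : |a| ≤ 1) (hβ : |β - Real.pi| < 1) (h : D T a β v) {v2 : ℝ} :
    Icc v v2 ⊆ {v | D T a β v} := by
  apply IsClosed.Icc_subset_of_forall_exists_gt (D_closed.inter isClosed_Icc) h
  rintro u ⟨hu, -⟩ y hy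
  have hJ := D_J hT ha hβ hu
  have hd := X_dv T a u
  have h1 : ∀ᶠ w in 𝓝[>] u, X (T, a, u) < X (T, a, w) := by
    have ht := (hasDerivAt_iff_tendsto_slope.1 hd).mono_left
      (nhdsWithin_mono u (fun w (hw : u < w) => hw.ne'))
    filter_upwards [ht.eventually (lt_mem_nhds hJ), self_mem_nhdsWithin] with w hw (hw2 : u < w)
    rw [slope_def_field] at hw
    have := (div_pos_iff_of_pos_right (sub_pos.2 hw2)).1 hw
    linarith
  have h2 := (open_v hT ha hβ hu).filter_mono (nhdsWithin_le_nhds (s := Ioi u))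
  obtain ⟨w, hw⟩ := (h1.and (h2.and (Ioc_mem_nhdsGT hy))).exists
  exact ⟨w, ⟨hw.2.1.1, hw.2.1.2, hu.2.2.trans hw.1.le⟩, hw.2.2⟩

lemma D_lt (hT : 0 < T) (ha : |a| ≤ 1) (hβ : |β - Real.pi| < 1) (h : D T a β v) {v2 : ℝ}
    (hlt : v < v2) : X (T, a, v) < X (T, a, v2) := by
  have hm : StrictMonoOn (fun v => X (T, a, v)) (Icc v v2) := by
    apply strictMonoOn_of_deriv_pos (convex_Icc _ _)
    · exact fun u _ => (X_dv T a u).continuousAt.continuousWithinAt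
    · intro u hu
      rw [(X_dv T a u).deriv]
      exact D_J hT ha hβ (D_up hT ha hβ h (interior_subset hu))
  exact hm ⟨le_rfl, hlt.le⟩ ⟨hlt.le, le_rfl⟩ hlt

lemma D_unique (hT : 0 < T) (ha : |a| ≤ 1) (hβ : |β - Real.pi| < 1) {v1 v2 : ℝ}
    (h1 : D T a β v1) (h2 : D T a β v2) (e1 : X (T, a, v1) = β) (e2 : X (T, a, v2) = β) :
    v1 = v2 := by
  rcases lt_trichotomy v1 v2 with h | h | h
  · have := D_lt hT ha hβ h1 h; linarith
  · exact h
  · have := D_lt hT ha hβ h2 h; linarith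

lemma D_exists (hT : 0 < T) (ha : |a| ≤ 1) (hβ : |β - Real.pi| < 1) :
    ∃ v, D T a β v ∧ X (T, a, v) = β := by
  have hne : {v | D T a β v}.Nonempty := by
    have hb := beta_bd hβ
    have ha2 := (abs_le.1 ha).2
    set v := 2 + (β - a + T ^ 2 / 2) / T with hv
    have hq : 0 < (β - a + T ^ 2 / 2) / T := div_pos (by nlinarith [sq_nonneg T]) hT
    have hvT : v * T = 2 * T + (β - a + T ^ 2 / 2) := by
      rw [hv, add_mul, div_mul_cancel₀ _ hT.ne']
    have S := sys a v
    have he : 1 ≤ v ^ 2 / 2 - Real.cos a := by nlinarith [Real.cos_le_one a]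
    have hy := S.rise (T := T) (by linarith) he
    refine ⟨v, by linarith, ?_, ?_⟩
    · intro t ht
      have h := mono_of (a := 0) (b := T) S.dx (fun t ht => (hy t ht).le) ⟨le_rfl, hT.le⟩ ht ht.1
      simpa [S.x0] using h
    · have := S.lower hT.le
      linarith
  have hbd : BddBelow {v | D T a β v} := ⟨0, fun v hv => hv.1⟩
  have hmem := D_closed.csInf_mem hne hbd
  set u := sInf {v | D T a β v} with hu
  have hmem' : D T a β u := hmem
  refine ⟨u, hmem', ?_⟩
  by_contra hn
  have hlt : β < X (T, a, u) := lt_of_le_of_ne hmem'.2.2 (Ne.symm hn)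
  have h1 : ∀ᶠ w in 𝓝 u, β < X (T, a, w) :=
    (X_dv T a u).continuousAt.eventually (lt_mem_nhds hlt)
  have h2 := ((open_v hT ha hβ hmem').and h1).filter_mono (nhdsWithin_le_nhds (s := Iio u))
  obtain ⟨w, hw, hw2⟩ := (h2.and self_mem_nhdsWithin).exists
  have : u ≤ w := csInf_le hbd ⟨hw.1.1, hw.1.2, hw.2.le⟩
  exact absurd hw2 (not_lt.2 this)

end

open Classical in
noncomputable def W (T a β : ℝ) : ℝ :=
  if h : 0 < T ∧ |a| ≤ 1 ∧ |β - Real.pi| < 1 then (D_exists h.1 h.2.1 h.2.2).choose else 0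

section
variable {T a β v : ℝ}

lemma W_spec (hT : 0 < T) (ha : |a| ≤ 1) (hβ : |β - Real.pi| < 1) :
    D T a β (W T a β) ∧ X (T, a, W T a β) = β := by
  rw [W, dif_pos ⟨hT, ha, hβ⟩]
  exact (D_exists hT ha hβ).choose_spec

lemma W_eq (hT : 0 < T) (ha : |a| ≤ 1) (hβ : |β - Real.pi| < 1) (hv : 0 ≤ v)
    (h : ∀ t ∈ Icc 0 T, a ≤ X (t, a, v)) (h2 : X (T, a, v) = β) : W T a β = v :=
  D_unique hT ha hβ (W_spec hT ha hβ).1 ⟨hv, h, h2.ge⟩ (W_spec hT ha hβ).2 h2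

lemma W_upper (hT : 0 < T) (ha : |a| ≤ 1) (hβ : |β - Real.pi| < 1) :
    ∀ t ∈ Icc 0 T, X (t, a, W T a β) ≤ max β Real.pi := by
  obtain ⟨h, hb⟩ := W_spec hT ha hβ
  obtain ⟨he, hv⟩ := D_energy hT ha hβ h
  have S := sys a (W T a β)
  intro t ht
  rcases le_or_gt 1 (W T a β ^ 2 / 2 - Real.cos a) with h1 | h1
  · have hy := S.rise (T := T) (by linarith) h1
    have h := mono_of (a := 0) (b := T) S.dx (fun t ht => (hy t ht).le) ht ⟨hT.le, le_rfl⟩ ht.2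
    simp only [hb] at h
    exact h.trans (le_max_left _ _)
  · exact (S.below ha h1 t ht).le.trans (le_max_right _ _)

lemma sol_eq {x y : ℝ → ℝ} (h : ∀ t ∈ Icc 0 T, HasDerivAt x (y t) t ∧
    HasDerivAt y (-Real.sin (x t)) t) (h0 : x 0 = a) (h1 : y 0 = v) :
    ∀ t ∈ Icc 0 T, x t = X (t, a, v) := by
  have S := sys a v
  have h := ODE_solution_unique (v := fun _ (p : ℝ × ℝ) => ((p.2, -Real.sin p.1) : ℝ × ℝ))
    (K := 1) (f := fun t => (x t, y t)) (g := fun t => (X (t, a, v), Y (t, a, v))) (a := 0) (b := T)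
    (fun _ => field_lip)
    (fun t ht => ((h t ht).1.continuousAt.prodMk (h t ht).2.continuousAt).continuousWithinAt)
    (fun t ht => ((h t (Ico_subset_Icc_self ht)).1.prodMk
      (h t (Ico_subset_Icc_self ht)).2).hasDerivWithinAt)
    (S.cx.prodMk S.cy).continuousOn
    (fun t _ => ((S.dx t).prodMk (S.dy t)).hasDerivWithinAt)
    (by simp [h0, h1, X_zero, Y_zero])
  intro t ht
  exact congrArg Prod.fst (h ht)

lemma init_nonneg (hT : 0 < T) {x : ℝ → ℝ} (h : HasDerivAt x v 0) (h0 : x 0 = a)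
    (hx : ∀ t ∈ Icc 0 T, a ≤ x t) : 0 ≤ v := by
  have ht := (hasDerivAt_iff_tendsto_slope.1 h).mono_left
      (nhdsWithin_mono 0 (fun w (hw : w ∈ Ioi (0:ℝ)) => ne_of_gt hw))
  refine ge_of_tendsto ht ?_
  filter_upwards [Ioc_mem_nhdsGT hT] with w hw
  rw [slope_def_field, h0]
  have := hx w ⟨hw.1.le, hw.2⟩
  exact div_nonneg (by linarith) (by linarith [hw.1])

lemma isInv (M : ℝ →L[ℝ] ℝ) (h : M 1 ≠ 0) : M.IsInvertible := by
  refine ⟨ContinuousLinearEquiv.unitsEquivAut ℝ (Units.mk0 (M 1) h), ?_⟩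
  ext
  simp

lemma W_smooth (hT : 0 < T) (ha : |a| ≤ 1) (hβ : |β - Real.pi| < 1) :
    ContDiffWithinAt ℝ ∞ (fun p : ℝ × ℝ × ℝ => W p.1 p.2.1 p.2.2)
      {p | 0 < p.1 ∧ |p.2.1| ≤ 1 ∧ |p.2.2 - Real.pi| < 1} (T, a, β) := by
  obtain ⟨hD, hb⟩ := W_spec hT ha hβ
  set v := W T a β with hv
  set u : (ℝ × ℝ × ℝ) × ℝ := ((T, a, β), v) with hu
  set f : (ℝ × ℝ × ℝ) × ℝ → ℝ := fun q => X (q.1.1, q.1.2.1, q.2) - q.1.2.2 with hf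
  have hfs : ContDiff ℝ ∞ f := by
    have := X_smooth
    rw [hf]; fun_prop
  have hfu : f u = 0 := by simp [hf, hu, hb]
  have hinv : (fderiv ℝ f u ∘L .inr ℝ (ℝ × ℝ × ℝ) ℝ).IsInvertible := by
    apply isInv
    have hc : HasDerivAt (fun w : ℝ => (((T, a, β), w) : (ℝ × ℝ × ℝ) × ℝ)) (0, 1) v :=
      (hasDerivAt_const v _).prodMk (hasDerivAt_id v)
    have h1 := ((hfs.differentiable (by simp)) u).hasFDerivAt
    have h2 : HasDerivAt (fun w => f ((T, a, β), w)) (fderiv ℝ f u (0, 1)) v :=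
      h1.comp_hasDerivAt v hc
    have h3 : HasDerivAt (fun w => f ((T, a, β), w)) (Jf a v T) v := (X_dv T a v).sub_const β
    have h4 := h2.unique h3
    have h5 := D_J hT ha hβ hD
    simp only [ContinuousLinearMap.comp_apply, ContinuousLinearMap.inr_apply]
    rw [h4]; exact h5.ne'
  have cdf : ContDiffAt ℝ ∞ f u := hfs.contDiffAt
  set ψ := cdf.implicitFunction (by simp) hinv with hψ
  have s1 : ContDiffAt ℝ ∞ ψ (T, a, β) := cdf.contDiffAt_implicitFunction (by simp) hinv
  have s2 : ψ (T, a, β) = v := cdf.implicitFunction_apply_self (by simp) hinv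
  have s3 : ∀ᶠ p in 𝓝 (T, a, β), f (p, ψ p) = 0 := by
    have := cdf.eventually_apply_implicitFunction (by simp) hinv
    rwa [hfu] at this
  have hv1 := (D_energy hT ha hβ hD).2
  have s4 : ∀ᶠ p : ℝ × ℝ × ℝ in 𝓝 (T, a, β), ∀ t ∈ Icc 0 p.1, p.2.1 ≤ X (t, p.2.1, ψ p) := by
    have ho := open_lemma hT hv1 (D_strict hT ha hβ hD)
    have hc : ContinuousAt (fun p : ℝ × ℝ × ℝ => ((p.1, p.2.1, ψ p) : ℝ × ℝ × ℝ)) (T, a, β) := by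
      have := s1.continuousAt
      fun_prop
    have hc' : Tendsto (fun p : ℝ × ℝ × ℝ => ((p.1, p.2.1, ψ p) : ℝ × ℝ × ℝ)) (𝓝 (T, a, β))
        (𝓝 (T, a, v)) := by
      have := hc.tendsto
      simpa only [s2] using this
    exact hc'.eventually ho
  have s5 : ∀ᶠ p : ℝ × ℝ × ℝ in 𝓝 (T, a, β), 0 < ψ p :=
    s1.continuousAt.eventually (lt_mem_nhds (by rw [s2]; linarith))
  refine s1.contDiffWithinAt.congr_of_eventuallyEq ?_ ?_
  · filter_upwards [self_mem_nhdsWithin, s3.filter_mono nhdsWithin_le_nhds,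
      s4.filter_mono nhdsWithin_le_nhds, s5.filter_mono nhdsWithin_le_nhds] with p hp h3 h4 h5
    exact W_eq hp.1 hp.2.1 hp.2.2 h5.le h4 (by simp only [hf] at h3; linarith)
  · rw [s2]
end
end Pend
end

/-- **Pendulum Lemma, case 1.** For `|α| ≤ 1`, `|β − π| < 1`, `T > 0` there is a
unique solution of `ẍ + sin x = 0` with `x(0) = α`, `x(T) = β` and
`α ≤ x(t) ≤ max(β, π)` on `[0,T]`; it depends smoothly on `(T, α, β)`. -/
theorem pendulum_lemma_case1 :
    ∃ F : ℝ → ℝ → ℝ → ℝ → ℝ,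
      ContDiffOn ℝ (⊤ : ℕ∞) (fun p : ℝ × ℝ × ℝ × ℝ => F p.1 p.2.1 p.2.2.1 p.2.2.2)
        {p : ℝ × ℝ × ℝ × ℝ |
          0 < p.1 ∧ |p.2.1| ≤ 1 ∧ |p.2.2.1 - Real.pi| < 1 ∧ p.2.2.2 ∈ Set.Icc 0 p.1} ∧
      ∀ T α β : ℝ, 0 < T → |α| ≤ 1 → |β - Real.pi| < 1 →
        PendBVP (F T α β) T α β ∧
        ∀ y : ℝ → ℝ, PendBVP y T α β → Set.EqOn y (F T α β) (Set.Icc 0 T) := by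
  refine ⟨fun T α β t => Pend.X (t, α, Pend.W T α β), ?_, ?_⟩
  · rintro ⟨T, α, β, t⟩ ⟨hT, ha, hb, -⟩
    have hW := Pend.W_smooth hT ha hb
    have hg : ContDiff ℝ (⊤ : ℕ∞)
        (fun p : ℝ × ℝ × ℝ × ℝ => ((p.1, p.2.1, p.2.2.1) : ℝ × ℝ × ℝ)) := by fun_prop
    have hW' := hW.comp (T, α, β, t) (hg.contDiffAt.contDiffWithinAt
      (s := {p : ℝ × ℝ × ℝ × ℝ |
          0 < p.1 ∧ |p.2.1| ≤ 1 ∧ |p.2.2.1 - Real.pi| < 1 ∧ p.2.2.2 ∈ Set.Icc 0 p.1}))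
      (t := {p | 0 < p.1 ∧ |p.2.1| ≤ 1 ∧ |p.2.2 - Real.pi| < 1})
      (fun p hp => ⟨hp.1, hp.2.1, hp.2.2.1⟩)
    have h1 : ContDiff ℝ (⊤ : ℕ∞) (fun p : ℝ × ℝ × ℝ × ℝ => p.2.2.2) := by fun_prop
    have h2 : ContDiff ℝ (⊤ : ℕ∞) (fun p : ℝ × ℝ × ℝ × ℝ => p.2.1) := by fun_prop
    exact Pend.X_smooth.contDiffAt.comp_contDiffWithinAt (T, α, β, t)
      (h1.contDiffWithinAt.prodMk (h2.contDiffWithinAt.prodMk hW'))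
  · intro T α β hT ha hb
    obtain ⟨hD, hX⟩ := Pend.W_spec hT ha hb
    refine ⟨⟨⟨fun t => Pend.Y (t, α, Pend.W T α β), fun t _ =>
      ⟨Pend.X_deriv _ _ t, Pend.Y_deriv _ _ t⟩⟩, Pend.X_zero _ _, hX,
      fun t ht => ⟨hD.2.1 t ht, Pend.W_upper hT ha hb t ht⟩⟩, ?_⟩
    rintro y ⟨⟨w, hw⟩, h0, h1, hxs⟩
    have hw0 : 0 ≤ w 0 := Pend.init_nonneg hT (hw 0 ⟨le_rfl, hT.le⟩).1 h0 (fun t ht => (hxs t ht).1)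
    have he := Pend.sol_eq hw h0 rfl
    have hWe : Pend.W T α β = w 0 := by
      apply Pend.W_eq hT ha hb hw0
      · intro t ht
        rw [← he t ht]; exact (hxs t ht).1
      · rw [← he T ⟨hT.le, le_rfl⟩]; exact h1
    intro t ht
    simp only [hWe]
    exact he t ht
end

section
/- For any real numbers α, β with β − α ≥ 2π (in particular β − α may be arbitrarily large) and any T > 0, there exists a unique solution x(t) of the pendulum equation ẍ + sin x = 0 on [0,T] satisfying x(0) = α, x(T) = β, and α ≤ x(t) ≤ β for all 0 ≤ t ≤ T. This solution depends smoothly on (T, α, β), and its energy decreases strictly monotonically from +∞ to 0 as T increases from 0 to +∞. -/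
/-- The boundary value problem of the Pendulum Lemma (winding case):
a solution of `ẍ + sin x = 0` on `[0,T]` with `x(0) = α`, `x(T) = β`,
confined to `[α, β]`. -/
def PendBVPmono (x : ℝ → ℝ) (T α β : ℝ) : Prop :=
  (∃ v : ℝ → ℝ, IsPendSolOn x v (Set.Icc 0 T)) ∧
  x 0 = α ∧ x T = β ∧ ∀ t ∈ Set.Icc 0 T, α ≤ x t ∧ x t ≤ β

open Set Filter Topology MeasureTheory intervalIntegral

/-- speed at position `u`, energy `E` -/
noncomputable def pwW (E u : ℝ) : ℝ := √(2 * (E + 1 + Real.cos u))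

noncomputable def pwTh (E x : ℝ) : ℝ := ∫ u in (0:ℝ)..x, (pwW E u)⁻¹

lemma pw_pos {E : ℝ} (hE : 0 < E) (u : ℝ) : 0 < 2 * (E + 1 + Real.cos u) := by
  linarith [Real.neg_one_le_cos u]

lemma pwW_pos {E : ℝ} (hE : 0 < E) (u : ℝ) : 0 < pwW E u := Real.sqrt_pos.2 (pw_pos hE u)

lemma pwW_sq {E : ℝ} (hE : 0 < E) (u : ℝ) : pwW E u ^ 2 = 2 * (E + 1 + Real.cos u) :=
  Real.sq_sqrt (pw_pos hE u).le

lemma pwW_cont (E : ℝ) : Continuous (pwW E) := by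
  unfold pwW; fun_prop

lemma pwH_cont {E : ℝ} (hE : 0 < E) : Continuous (fun u => (pwW E u)⁻¹) :=
  (pwW_cont E).inv₀ (fun u => (pwW_pos hE u).ne')

lemma pwTh_sub {E : ℝ} (hE : 0 < E) (a b : ℝ) :
    pwTh E b - pwTh E a = ∫ u in a..b, (pwW E u)⁻¹ :=
  integral_interval_sub_left ((pwH_cont hE).intervalIntegrable _ _)
    ((pwH_cont hE).intervalIntegrable _ _)

lemma pwTh_hasDerivAt {E : ℝ} (hE : 0 < E) (x : ℝ) : HasDerivAt (pwTh E) (pwW E x)⁻¹ x :=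
  integral_hasDerivAt_right ((pwH_cont hE).intervalIntegrable _ _)
    (pwH_cont hE).stronglyMeasurable.stronglyMeasurableAtFilter (pwH_cont hE).continuousAt

lemma pwTh_strictMono {E : ℝ} (hE : 0 < E) : StrictMono (pwTh E) :=
  strictMono_of_hasDerivAt_pos (fun x => pwTh_hasDerivAt hE x)
    (fun x => inv_pos.2 (pwW_pos hE x))

lemma pwTh_contDiffOn :
    ContDiffOn ℝ (⊤ : ℕ∞) (fun q : ℝ × ℝ => pwTh q.1 q.2) {q | 0 < q.1} := by
  let χ : ContDiffBump (0 : ℝ) := ⟨1, 2, one_pos, one_lt_two⟩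
  let g : ℝ × ℝ → ℝ → ℝ := fun q y => χ y * (q.2 * (pwW q.1 (-y * q.2))⁻¹)
  have hs : IsOpen {q : ℝ × ℝ | 0 < q.1} := isOpen_lt continuous_const continuous_fst
  have hg : ContDiffOn ℝ (⊤ : ℕ∞) (↿g) ({q : ℝ × ℝ | 0 < q.1} ×ˢ univ) := by
    rintro ⟨⟨E, x⟩, y⟩ ⟨hE, -⟩
    have hE : 0 < E := hE
    apply ContDiffAt.contDiffWithinAt
    change ContDiffAt ℝ _ (fun r : (ℝ × ℝ) × ℝ =>
      χ r.2 * (r.1.2 * (√(2 * (r.1.1 + 1 + Real.cos (-r.2 * r.1.2))))⁻¹)) _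
    have h1 : ContDiffAt ℝ (⊤ : ℕ∞) (fun r : (ℝ × ℝ) × ℝ =>
      (2 * (r.1.1 + 1 + Real.cos (-r.2 * r.1.2)))) ((E, x), y) := by fun_prop
    have h2 := (h1.sqrt (pw_pos hE _).ne').inv (pwW_pos hE _).ne'
    have h3 : ContDiffAt ℝ (⊤ : ℕ∞) (fun r : (ℝ × ℝ) × ℝ => χ r.2) ((E, x), y) :=
      (χ.contDiff.comp contDiff_snd).contDiffAt
    have h4 : ContDiffAt ℝ (⊤ : ℕ∞) (fun r : (ℝ × ℝ) × ℝ => r.1.2) ((E, x), y) := by fun_prop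
    exact h3.mul (h4.mul h2)
  have hf : LocallyIntegrable (indicator (Ioc (0:ℝ) 1) (fun _ => (1:ℝ))) volume := by
    apply Integrable.locallyIntegrable
    rw [integrable_indicator_iff measurableSet_Ioc]
    exact integrableOn_const (by simp)
  have key := contDiffOn_convolution_right_with_param_comp (n := ⊤) (μ := volume)
    (ContinuousLinearMap.mul ℝ ℝ) (s := {q : ℝ × ℝ | 0 < q.1}) (v := fun _ => (0:ℝ))
    contDiffOn_const (g := g) (k := Metric.closedBall 0 2) hs (isCompact_closedBall _ _)
    (by
      intro p y _ hy
      have : χ y = 0 := by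
        apply χ.zero_of_le_dist
        simp only [Metric.mem_closedBall, not_le] at hy
        exact hy.le
      simp [g, this]) hf hg
  refine key.congr ?_
  rintro ⟨E, x⟩ hE
  have hE : 0 < E := hE
  change pwTh E x = ∫ t, _
  have : (fun t : ℝ => (ContinuousLinearMap.mul ℝ ℝ) (indicator (Ioc (0:ℝ) 1) (fun _ => (1:ℝ)) t)
      (g (E, x) (0 - t))) = indicator (Ioc (0:ℝ) 1) (fun t => x * (pwW E (t * x))⁻¹) := by
    funext t
    by_cases ht : t ∈ Ioc (0:ℝ) 1
    · have : χ (0 - t) = 1 := by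
        apply χ.one_of_mem_closedBall
        simp only [Metric.mem_closedBall, dist_zero_right, Real.norm_eq_abs, χ]
        rw [abs_le]; constructor <;> linarith [ht.1, ht.2]
      simp [ht, g] at this ⊢
      simp [this]
    · simp [ht]
  rw [this, MeasureTheory.integral_indicator measurableSet_Ioc,
    ← intervalIntegral.integral_of_le zero_le_one, intervalIntegral.integral_const_mul]
  have := intervalIntegral.mul_integral_comp_mul_right (a := 0) (b := 1)
    (f := fun u => (pwW E u)⁻¹) x
  rw [this]; simp [pwTh]

lemma pwH_hasDerivAt {E : ℝ} (hE : 0 < E) (u : ℝ) :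
    HasDerivAt (fun e => (pwW e u)⁻¹) (-((pwW E u) ^ 3)⁻¹) E := by
  have h1 : HasDerivAt (fun e : ℝ => 2 * (e + 1 + Real.cos u)) 2 E := by
    simpa using (((hasDerivAt_id E).add_const 1).add_const (Real.cos u)).const_mul 2
  have h2 := (h1.sqrt (pw_pos hE u).ne').inv (pwW_pos hE u).ne'
  refine h2.congr_deriv ?_
  have := pwW_pos hE u
  change -(2 / (2 * pwW E u)) / (pwW E u) ^ 2 = _
  field_simp

lemma pwW_lower {E e : ℝ} (u : ℝ) (he : E / 2 < e) : √E ≤ pwW e u := by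
  apply Real.sqrt_le_sqrt
  linarith [Real.neg_one_le_cos u]

lemma pwJ_hasDerivAt {E a b : ℝ} (hE : 0 < E) (hab : a < b) :
    ∃ d : ℝ, d < 0 ∧ HasDerivAt (fun e => pwTh e b - pwTh e a) d E := by
  have hc : Continuous (fun u => ((pwW E u) ^ 3)⁻¹) :=
    ((pwW_cont E).pow 3).inv₀ (fun u => (pow_pos (pwW_pos hE u) 3).ne')
  refine ⟨∫ u in a..b, -((pwW E u) ^ 3)⁻¹, ?_, ?_⟩
  · rw [intervalIntegral.integral_neg, neg_lt_zero]
    exact intervalIntegral_pos_of_pos (hc.intervalIntegrable _ _)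
      (fun u => inv_pos.2 (pow_pos (pwW_pos hE u) 3)) hab
  · have key := (intervalIntegral.hasDerivAt_integral_of_dominated_loc_of_deriv_le (𝕜 := ℝ)
      (μ := volume) (a := a) (b := b)
      (F := fun e u => (pwW e u)⁻¹) (F' := fun e u => -((pwW e u) ^ 3)⁻¹) (x₀ := E)
      (s := Ioi (E / 2)) (bound := fun _ => ((√E) ^ 3)⁻¹) (Ioi_mem_nhds (by linarith))
      (by
        filter_upwards [Ioi_mem_nhds hE] with e he
        exact (pwH_cont he).aestronglyMeasurable)
      ((pwH_cont hE).intervalIntegrable _ _)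
      hc.neg.aestronglyMeasurable
      (by
        refine Eventually.of_forall fun u _ e he => ?_
        have he : E / 2 < e := he
        have h0 : 0 < √E := Real.sqrt_pos.2 hE
        have h1 := pwW_lower u he
        rw [norm_neg, Real.norm_eq_abs, abs_of_pos (by
          have := h0.trans_le h1
          positivity)]
        gcongr)
      (by simp)
      (by
        refine Eventually.of_forall fun u _ e he => ?_
        have he : E / 2 < e := he
        exact pwH_hasDerivAt (by linarith) u)).2
    refine key.congr_of_eventuallyEq ?_
    filter_upwards [Ioi_mem_nhds hE] with e he
    exact pwTh_sub he a b

lemma pwJ_strictAnti {a b : ℝ} (hab : a < b) :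
    StrictAntiOn (fun e => pwTh e b - pwTh e a) (Ioi 0) := by
  apply strictAntiOn_of_deriv_neg (convex_Ioi 0)
  · intro E hE
    obtain ⟨d, _, h⟩ := pwJ_hasDerivAt hE hab
    exact h.continuousAt.continuousWithinAt
  · intro E hE
    rw [interior_Ioi] at hE
    obtain ⟨d, hd, h⟩ := pwJ_hasDerivAt hE hab
    rwa [h.deriv]

lemma pwJ_upper {E a b : ℝ} (hE : 0 < E) (hab : a ≤ b) :
    pwTh E b - pwTh E a ≤ (b - a) * (√E)⁻¹ := by
  rw [pwTh_sub hE]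
  have : ∫ u in a..b, (pwW E u)⁻¹ ≤ ∫ u in a..b, (√E)⁻¹ := by
    apply intervalIntegral.integral_mono_on hab ((pwH_cont hE).intervalIntegrable _ _) (by simp)
    intro u _
    have := pwW_lower (E := E) u (show E / 2 < E by linarith)
    have h0 : 0 < √E := Real.sqrt_pos.2 hE
    gcongr
  simpa using this

lemma pwTh_lower {E a b : ℝ} (hE : 0 < E) (hab : a ≤ b) :
    (b - a) * (√(2 * (E + 2)))⁻¹ ≤ pwTh E b - pwTh E a := by
  rw [pwTh_sub hE]
  have : ∫ u in a..b, (√(2 * (E + 2)))⁻¹ ≤ ∫ u in a..b, (pwW E u)⁻¹ := by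
    apply intervalIntegral.integral_mono_on hab (by simp) ((pwH_cont hE).intervalIntegrable _ _)
    intro u _
    have h1 := pwW_pos hE u
    have : pwW E u ≤ √(2 * (E + 2)) := by
      apply Real.sqrt_le_sqrt; linarith [Real.cos_le_one u]
    gcongr
  rwa [intervalIntegral.integral_const, smul_eq_mul] at this

lemma pwTh_zero (E : ℝ) : pwTh E 0 = 0 := by simp [pwTh]

lemma pwTh_surj {E : ℝ} (hE : 0 < E) : Function.Surjective (pwTh E) := by
  have hk : 0 < (√(2 * (E + 2)))⁻¹ := by positivity
  apply Continuous.surjective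
  · exact continuous_iff_continuousAt.2 fun x => (pwTh_hasDerivAt hE x).continuousAt
  · apply tendsto_atTop_mono' _ _ (tendsto_id.atTop_mul_const hk)
    filter_upwards [eventually_ge_atTop 0] with x hx
    simpa [pwTh_zero] using pwTh_lower hE hx
  · apply tendsto_atBot_mono' _ _ (tendsto_id.atBot_mul_const hk)
    filter_upwards [eventually_le_atBot 0] with x hx
    have := pwTh_lower hE hx
    simp only [pwTh_zero, id] at this ⊢
    linarith

lemma pwJ_lower {E a b : ℝ} (hE : 0 < E) (hab : 2 * Real.pi ≤ b - a) :
    -Real.log (√(2 * E)) ≤ pwTh E b - pwTh E a := by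
  have hpi := Real.pi_gt_three
  have hper : Function.Periodic (fun u => (pwW E u)⁻¹) (2 * Real.pi) := by
    intro u; simp [pwW]
  have hm := (pwTh_strictMono hE).monotone
  have h1 : pwTh E (a + 2 * Real.pi) ≤ pwTh E b := hm (by linarith)
  have h2 := pwTh_sub hE a (a + 2 * Real.pi)
  rw [hper.intervalIntegral_add_eq a Real.pi, ← pwTh_sub hE] at h2
  have h3 : pwTh E (Real.pi + 1) ≤ pwTh E (Real.pi + 2 * Real.pi) := hm (by linarith)
  set r := √(2 * E) with hr
  have hr0 : 0 < r := Real.sqrt_pos.2 (by linarith)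
  have hr2 : r ^ 2 = 2 * E := Real.sq_sqrt (by linarith)
  -- monotone comparison function
  have h4 : MonotoneOn (fun s => pwTh E (Real.pi + s) - Real.log (r + s)) (Icc 0 1) := by
    have hd : ∀ s ∈ Icc (0:ℝ) 1, HasDerivAt (fun s => pwTh E (Real.pi + s) - Real.log (r + s))
        ((pwW E (Real.pi + s))⁻¹ - 1 / (r + s)) s := by
      intro s hs
      have e1 := (pwTh_hasDerivAt hE (Real.pi + s)).comp_const_add Real.pi s
      have e2 : HasDerivAt (fun s => r + s) 1 s := (hasDerivAt_id s).const_add r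
      exact e1.sub (e2.log (by linarith [hs.1]))
    apply monotoneOn_of_deriv_nonneg (convex_Icc 0 1)
    · exact fun s hs => (hd s hs).continuousAt.continuousWithinAt
    · exact fun s hs => (hd s (interior_subset hs)).differentiableAt.differentiableWithinAt
    · intro s hs
      have hs := interior_subset hs
      rw [(hd s hs).deriv, one_div, sub_nonneg]
      have hw := pwW_pos hE (Real.pi + s)
      have : pwW E (Real.pi + s) ≤ r + s := by
        apply abs_le_of_sq_le_sq' _ (by linarith [hs.1]) |>.2
        rw [pwW_sq hE, add_comm Real.pi, Real.cos_add_pi]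
        have := Real.one_sub_sq_div_two_le_cos (x := s)
        nlinarith [hs.1]
      gcongr
  have h5 := h4 (left_mem_Icc.2 zero_le_one) (right_mem_Icc.2 zero_le_one) zero_le_one
  simp only [add_zero] at h5
  have h6 : 0 ≤ Real.log (r + 1) := Real.log_nonneg (by linarith)
  linarith

lemma pwE_exists {T a b : ℝ} (hT : 0 < T) (hab : 2 * Real.pi ≤ b - a) :
    ∃ E : ℝ, 0 < E ∧ pwTh E b - pwTh E a = T := by
  have hpi := Real.pi_gt_three
  have hab' : a < b := by linarith
  have hc : ContinuousOn (fun e => pwTh e b - pwTh e a) (Ioi 0) := by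
    intro E hE
    obtain ⟨d, _, h⟩ := pwJ_hasDerivAt hE hab'
    exact h.continuousAt.continuousWithinAt
  -- small energy
  obtain ⟨E₁, hE₁, h₁⟩ : ∃ E : ℝ, 0 < E ∧ T ≤ pwTh E b - pwTh E a := by
    refine ⟨Real.exp (-T) ^ 2 / 2, by positivity, ?_⟩
    have := pwJ_lower (E := Real.exp (-T) ^ 2 / 2) (by positivity) hab
    rw [mul_div_cancel₀ _ (two_ne_zero), Real.sqrt_sq (Real.exp_pos _).le, Real.log_exp] at this
    linarith
  obtain ⟨E₂, hE₂, h₂⟩ : ∃ E : ℝ, 0 < E ∧ pwTh E b - pwTh E a ≤ T := by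
    have hp : 0 < (b - a) / T := div_pos (by linarith) hT
    refine ⟨((b - a) / T) ^ 2, by positivity, ?_⟩
    have := pwJ_upper (E := ((b - a) / T) ^ 2) (by positivity) hab'.le
    rw [Real.sqrt_sq hp.le] at this
    have e : (b - a) * ((b - a) / T)⁻¹ = T := by
      have : b - a ≠ 0 := by linarith
      field_simp
    linarith
  obtain ⟨E, hE, h⟩ := isPreconnected_Ioi.intermediate_value (show E₂ ∈ Ioi (0:ℝ) from hE₂)
    (show E₁ ∈ Ioi (0:ℝ) from hE₁) hc ⟨h₂, h₁⟩
  exact ⟨E, hE, h⟩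

open Classical in
/-- energy of the solution -/
noncomputable def pwE (T a b : ℝ) : ℝ :=
  if h : ∃ E : ℝ, 0 < E ∧ pwTh E b - pwTh E a = T then h.choose else 1

lemma pwE_pos (T a b : ℝ) : 0 < pwE T a b := by
  unfold pwE
  split_ifs with h
  · exact h.choose_spec.1
  · exact one_pos

lemma pwE_spec {T a b : ℝ} (hT : 0 < T) (hab : 2 * Real.pi ≤ b - a) :
    pwTh (pwE T a b) b - pwTh (pwE T a b) a = T := by
  have h := pwE_exists hT hab
  unfold pwE
  rw [dif_pos h]
  exact h.choose_spec.2

/-- position at time `t` -/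
noncomputable def pwX (E a t : ℝ) : ℝ := Function.invFun (pwTh E) (t + pwTh E a)

lemma pwX_spec {E : ℝ} (hE : 0 < E) (a t : ℝ) : pwTh E (pwX E a t) = t + pwTh E a :=
  Function.rightInverse_invFun (pwTh_surj hE) _

lemma pwX_cont {E : ℝ} (hE : 0 < E) (a : ℝ) : Continuous (pwX E a) := by
  have h : Continuous ((pwTh_strictMono hE).orderIsoOfSurjective _ (pwTh_surj hE)).symm :=
    OrderIso.continuous _
  have : pwX E a = fun t => ((pwTh_strictMono hE).orderIsoOfSurjective _ (pwTh_surj hE)).symm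
      (t + pwTh E a) := by
    funext t
    apply (pwTh_strictMono hE).injective
    rw [pwX_spec hE]
    exact (((pwTh_strictMono hE).orderIsoOfSurjective _ (pwTh_surj hE)).apply_symm_apply _).symm
  rw [this]
  exact h.comp (by fun_prop)

lemma pwX_hasDerivAt {E : ℝ} (hE : 0 < E) (a t : ℝ) :
    HasDerivAt (pwX E a) (pwW E (pwX E a t)) t := by
  have h1 : HasDerivAt (fun x => pwTh E x - pwTh E a) (pwW E (pwX E a t))⁻¹ (pwX E a t) :=
    (pwTh_hasDerivAt hE _).sub_const _
  have := h1.of_local_left_inverse (pwX_cont hE a).continuousAt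
    (inv_ne_zero (pwW_pos hE _).ne')
    (Eventually.of_forall fun s => by rw [pwX_spec hE]; ring)
  simpa using this

lemma pwV_hasDerivAt {E : ℝ} (hE : 0 < E) (a t : ℝ) :
    HasDerivAt (fun s => pwW E (pwX E a s)) (-Real.sin (pwX E a t)) t := by
  have h1 := (((pwX_hasDerivAt hE a t).cos.const_add (E + 1)).const_mul 2).sqrt
    (pw_pos hE _).ne'
  refine h1.congr_deriv ?_
  have := pwW_pos hE (pwX E a t)
  change (2 * (-Real.sin (pwX E a t) * pwW E (pwX E a t))) / (2 * pwW E (pwX E a t)) = _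
  field_simp

lemma pw_unique {T a b : ℝ} (hT : 0 < T) (hab : 2 * Real.pi ≤ b - a) {y v : ℝ → ℝ}
    (hy : ∀ t ∈ Icc 0 T, HasDerivAt y (v t) t ∧ HasDerivAt v (-Real.sin (y t)) t)
    (h0 : y 0 = a) (h1 : y T = b) : EqOn y (pwX (pwE T a b) a) (Icc 0 T) := by
  have hpi := Real.pi_gt_three
  have hab' : a < b := by linarith
  have hyc : ContinuousOn y (Icc 0 T) := fun t ht => (hy t ht).1.continuousAt.continuousWithinAt
  have hvc : ContinuousOn v (Icc 0 T) := fun t ht => (hy t ht).2.continuousAt.continuousWithinAt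
  have hm0 : (0:ℝ) ∈ Icc 0 T := ⟨le_rfl, hT.le⟩
  -- energy is constant
  obtain ⟨e, he⟩ : ∃ e : ℝ, ∀ t ∈ Icc 0 T, v t ^ 2 = 2 * (e + 1 + Real.cos (y t)) := by
    have hd : ∀ t ∈ Icc 0 T, HasDerivAt (fun t => v t ^ 2 - 2 * Real.cos (y t)) 0 t := by
      intro t ht
      have := ((hy t ht).2.pow 2).sub ((hy t ht).1.cos.const_mul 2)
      refine this.congr_deriv ?_
      simp; ring
    have hcst := constant_of_has_deriv_right_zero
      (f := fun t => v t ^ 2 - 2 * Real.cos (y t)) (a := 0) (b := T)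
      (fun t ht => (hd t ht).continuousAt.continuousWithinAt)
      (fun t ht => (hd t (Ico_subset_Icc_self ht)).hasDerivWithinAt)
    refine ⟨(v 0 ^ 2 - 2 * Real.cos (y 0)) / 2 - 1, fun t ht => ?_⟩
    have := hcst t ht
    linarith
  -- the solution passes through an odd multiple of π
  obtain ⟨t₀, ht₀, hc₀⟩ : ∃ t ∈ Icc 0 T, Real.cos (y t) = -1 := by
    obtain ⟨k, hk, -⟩ := existsUnique_add_zsmul_mem_Ico Real.two_pi_pos Real.pi a
    have hmem : Real.pi + k • (2 * Real.pi) ∈ Icc (y 0) (y T) := by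
      rw [h0, h1]; exact ⟨hk.1, by linarith [hk.2]⟩
    obtain ⟨t, ht, hyt⟩ := intermediate_value_Icc hT.le hyc hmem
    refine ⟨t, ht, ?_⟩
    rw [hyt, zsmul_eq_mul, Real.cos_add_int_mul_two_pi, Real.cos_pi]
  have he0 : 0 ≤ e := by
    have := he t₀ ht₀
    rw [hc₀] at this
    nlinarith [sq_nonneg (v t₀)]
  have hepos : 0 < e := by
    rcases he0.lt_or_eq with h | h
    · exact h
    exfalso
    subst h
    set c := y t₀ with hc
    have hs0 : Real.sin c = 0 := by
      have := Real.sin_sq_add_cos_sq c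
      rw [hc₀] at this
      nlinarith
    -- |v| ≤ |y - c|
    have hb : ∀ t ∈ Icc 0 T, |v t| ≤ |y t - c| := by
      intro t ht
      apply sq_le_sq.1
      rw [he t ht]
      have h2 := Real.one_sub_sq_div_two_le_cos (x := y t - c)
      rw [Real.cos_sub, hc₀, hs0] at h2
      linarith
    have hw : ∀ t ∈ Icc 0 T, |2 * (y t - c) * v t| ≤ 2 * (y t - c) ^ 2 := by
      intro t ht
      rw [abs_mul, abs_mul, abs_two, ← sq_abs (y t - c)]
      nlinarith [hb t ht, abs_nonneg (y t - c)]
    have hd : ∀ k : ℝ, ∀ t ∈ Icc 0 T, HasDerivAt (fun t => (y t - c) ^ 2 * Real.exp (k * t))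
        ((2 * (y t - c) * v t + k * (y t - c) ^ 2) * Real.exp (k * t)) t := by
      intro k t ht
      have e1 := ((hy t ht).1.sub_const c).pow 2
      have e2 := ((hasDerivAt_id t).const_mul k).exp
      refine (e1.mul e2).congr_deriv ?_
      simp; ring
    have hmono : MonotoneOn (fun t => (y t - c) ^ 2 * Real.exp (2 * t)) (Icc 0 T) := by
      apply monotoneOn_of_deriv_nonneg (convex_Icc 0 T)
      · exact fun s hs => (hd 2 s hs).continuousAt.continuousWithinAt
      · exact fun s hs => (hd 2 s (interior_subset hs)).differentiableAt.differentiableWithinAt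
      · intro s hs
        have hs := interior_subset hs
        rw [(hd 2 s hs).deriv]
        have := (abs_le.1 (hw s hs)).1
        exact mul_nonneg (by linarith) (Real.exp_pos _).le
    have hanti : AntitoneOn (fun t => (y t - c) ^ 2 * Real.exp (-2 * t)) (Icc 0 T) := by
      apply antitoneOn_of_deriv_nonpos (convex_Icc 0 T)
      · exact fun s hs => (hd (-2) s hs).continuousAt.continuousWithinAt
      · exact fun s hs => (hd (-2) s (interior_subset hs)).differentiableAt.differentiableWithinAt
      · intro s hs
        have hs := interior_subset hs
        rw [(hd (-2) s hs).deriv]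
        have := (abs_le.1 (hw s hs)).2
        exact mul_nonpos_of_nonpos_of_nonneg (by linarith) (Real.exp_pos _).le
    have hmT : T ∈ Icc 0 T := ⟨hT.le, le_rfl⟩
    have k1 := hmono hm0 ht₀ ht₀.1
    have k2 := hanti ht₀ hmT ht₀.2
    simp only [← hc, sub_self] at k1 k2
    have k3 : (y 0 - c) ^ 2 ≤ 0 := by
      by_contra hne
      push Not at hne
      have := mul_pos hne (Real.exp_pos (2 * 0))
      linarith
    have k4 : (y T - c) ^ 2 ≤ 0 := by
      by_contra hne
      push Not at hne
      have := mul_pos hne (Real.exp_pos (-2 * T))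
      linarith
    rw [h0] at k3
    rw [h1] at k4
    have k5 := pow_eq_zero_iff two_ne_zero |>.1 (le_antisymm k3 (sq_nonneg _))
    have k6 := pow_eq_zero_iff two_ne_zero |>.1 (le_antisymm k4 (sq_nonneg _))
    linarith
  -- positive velocity
  have hvne : ∀ t ∈ Icc 0 T, v t ≠ 0 := by
    intro t ht h
    have := he t ht
    rw [h] at this
    have := pw_pos hepos (y t)
    simp at *
    linarith
  obtain ⟨ξ, hξ, hvξ⟩ := exists_hasDerivAt_eq_slope y v hT hyc
    (fun t ht => (hy t (Ioo_subset_Icc_self ht)).1)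
  have hvξ0 : 0 < v ξ := by
    rw [hvξ, h0, h1]; exact div_pos (by linarith) (by linarith)
  have hvpos : ∀ t ∈ Icc 0 T, 0 < v t := by
    intro t ht
    by_contra hn
    push Not at hn
    obtain ⟨s, hs, hs0⟩ := isPreconnected_Icc.intermediate_value ht (Ioo_subset_Icc_self hξ) hvc
      ⟨hn, hvξ0.le⟩
    exact hvne s hs hs0
  have hvw : ∀ t ∈ Icc 0 T, v t = pwW e (y t) := by
    intro t ht
    rw [pwW, ← he t ht, Real.sqrt_sq (hvpos t ht).le]
  have hth : ∀ t ∈ Icc 0 T, pwTh e (y t) = t + pwTh e a := by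
    have hd : ∀ t ∈ Icc 0 T, HasDerivAt (fun t => pwTh e (y t) - t) 0 t := by
      intro t ht
      have := ((pwTh_hasDerivAt hepos (y t)).comp t (hy t ht).1).sub (hasDerivAt_id t)
      refine this.congr_deriv ?_
      rw [hvw t ht, inv_mul_cancel₀ (pwW_pos hepos _).ne', sub_self]
    have hcst := constant_of_has_deriv_right_zero
      (f := fun t => pwTh e (y t) - t) (a := 0) (b := T)
      (fun t ht => (hd t ht).continuousAt.continuousWithinAt)
      (fun t ht => (hd t (Ico_subset_Icc_self ht)).hasDerivWithinAt)
    intro t ht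
    have := hcst t ht
    simp only [h0] at this
    linarith
  have heE : e = pwE T a b := by
    apply (pwJ_strictAnti hab').injOn hepos (pwE_pos T a b)
    have := hth T ⟨hT.le, le_rfl⟩
    rw [h1] at this
    simp only
    rw [pwE_spec hT hab]
    linarith
  intro t ht
  apply (pwTh_strictMono hepos).injective
  rw [hth t ht, heE, pwX_spec (pwE_pos T a b)]

/-- A right inverse with values in a region of injectivity of a smooth map is smooth. -/
lemma pw_inverse {V : Type*} [NormedAddCommGroup V] [NormedSpace ℝ V] [FiniteDimensional ℝ V]
    {Ψ g : V → V} {U S : Set V} {p : V} (hU : IsOpen U) (hinj : InjOn Ψ U)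
    (hg : ∀ p ∈ S, g p ∈ U ∧ Ψ (g p) = p) (hp : p ∈ S)
    (hΨ : ContDiffAt ℝ (⊤ : ℕ∞) Ψ (g p))
    (hD : ∀ w, fderiv ℝ Ψ (g p) w = 0 → w = 0) :
    ContDiffWithinAt ℝ (⊤ : ℕ∞) g S p := by
  have : CompleteSpace V := FiniteDimensional.complete ℝ V
  have hn : ((⊤ : ℕ∞) : WithTop ℕ∞) ≠ 0 := by simp
  have hinjD : Function.Injective (fderiv ℝ Ψ (g p) : V →ₗ[ℝ] V) :=
    (injective_iff_map_eq_zero _).2 hD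
  let e : V ≃L[ℝ] V := (LinearEquiv.ofInjectiveEndo _ hinjD).toContinuousLinearEquiv
  have he : (e : V →L[ℝ] V) = fderiv ℝ Ψ (g p) := by
    ext w; rfl
  have hf' : HasFDerivAt Ψ (e : V →L[ℝ] V) (g p) := by
    rw [he]; exact (hΨ.differentiableAt hn).hasFDerivAt
  have h1 := hΨ.to_localInverse hf' hn
  have h2 := (hΨ.hasStrictFDerivAt' hf' hn).eventually_right_inverse
  have h3 := hΨ.localInverse_apply_image hf' hn
  change ∀ᶠ y in 𝓝 (Ψ (g p)), Ψ (hΨ.localInverse hf' hn y) = y at h2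
  rw [(hg p hp).2] at h1 h2 h3
  have h4 : ∀ᶠ y in 𝓝 p, hΨ.localInverse hf' hn y ∈ U := by
    apply h1.continuousAt.eventually_mem
    rw [h3]
    exact hU.mem_nhds (hg p hp).1
  refine h1.contDiffWithinAt.congr_of_eventuallyEq_of_mem ?_ hp
  filter_upwards [nhdsWithin_le_nhds h2, nhdsWithin_le_nhds h4, self_mem_nhdsWithin]
    with y hy2 hy4 hyS
  exact hinj (hg y hyS).1 hy4 ((hg y hyS).2.trans hy2.symm)

/-- parameters `(E, a, b, x)` to `(T, a, b, t)` -/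
noncomputable def pwPsi (q : ℝ × ℝ × ℝ × ℝ) : ℝ × ℝ × ℝ × ℝ :=
  (pwTh q.1 q.2.2.1 - pwTh q.1 q.2.1, q.2.1, q.2.2.1, pwTh q.1 q.2.2.2 - pwTh q.1 q.2.1)

lemma pwPsi_contDiffAt {q : ℝ × ℝ × ℝ × ℝ} (hq : 0 < q.1) :
    ContDiffAt ℝ (⊤ : ℕ∞) pwPsi q := by
  have hs : IsOpen {q : ℝ × ℝ | 0 < q.1} := isOpen_lt continuous_const continuous_fst
  have key : ∀ f : ℝ × ℝ × ℝ × ℝ → ℝ, ContDiff ℝ (⊤ : ℕ∞) f →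
      ContDiffAt ℝ (⊤ : ℕ∞) (fun r : ℝ × ℝ × ℝ × ℝ => pwTh r.1 (f r)) q := by
    intro f hf
    have h1 : ContDiffAt ℝ (⊤ : ℕ∞) (fun q : ℝ × ℝ => pwTh q.1 q.2) (q.1, f q) :=
      pwTh_contDiffOn.contDiffAt (hs.mem_nhds hq)
    exact h1.comp (f := fun r : ℝ × ℝ × ℝ × ℝ => (r.1, f r)) q
      (contDiffAt_fst.prodMk hf.contDiffAt)
  have k1 := key (fun r => r.2.1) (by fun_prop)
  have k2 := key (fun r => r.2.2.1) (by fun_prop)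
  have k3 := key (fun r => r.2.2.2) (by fun_prop)
  refine (k2.sub k1).prodMk (ContDiffAt.prodMk ?_ (ContDiffAt.prodMk ?_ (k3.sub k1)))
  · fun_prop
  · fun_prop

lemma pwPsi_injOn : InjOn pwPsi {q | 0 < q.1 ∧ q.2.1 < q.2.2.1} := by
  rintro ⟨E, a, b, x⟩ ⟨hE, hab⟩ ⟨E', a', b', x'⟩ ⟨hE', hab'⟩ h
  simp only [pwPsi, Prod.mk.injEq] at h hE hab hE' hab'
  obtain ⟨h1, rfl, rfl, h4⟩ := h
  have : E = E' := (pwJ_strictAnti hab).injOn hE hE' h1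
  subst this
  have : x = x' := (pwTh_strictMono hE).injective (by linarith)
  rw [this]

lemma pw_fst {A B : Type*} [NormedAddCommGroup A] [NormedSpace ℝ A] [NormedAddCommGroup B]
    [NormedSpace ℝ B] {f : ℝ → A × B} (h : HasDerivAt f 0 0) :
    HasDerivAt (fun s => (f s).1) 0 0 := by
  have h1 : HasFDerivAt (Prod.fst : A × B → A) (ContinuousLinearMap.fst ℝ A B) (f 0) :=
    hasFDerivAt_fst
  have h2 := h1.comp_hasDerivAt (0:ℝ) h
  exact h2

lemma pw_snd {A B : Type*} [NormedAddCommGroup A] [NormedSpace ℝ A] [NormedAddCommGroup B]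
    [NormedSpace ℝ B] {f : ℝ → A × B} (h : HasDerivAt f 0 0) :
    HasDerivAt (fun s => (f s).2) 0 0 := by
  have h1 : HasFDerivAt (Prod.snd : A × B → B) (ContinuousLinearMap.snd ℝ A B) (f 0) :=
    hasFDerivAt_snd
  have h2 := h1.comp_hasDerivAt (0:ℝ) h
  exact h2

lemma pwPsi_fderiv {q : ℝ × ℝ × ℝ × ℝ} (hq : 0 < q.1) (hab : q.2.1 < q.2.2.1)
    (w : ℝ × ℝ × ℝ × ℝ) (hw : fderiv ℝ pwPsi q w = 0) : w = 0 := by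
  have hd : HasFDerivAt pwPsi (fderiv ℝ pwPsi q) q :=
    ((pwPsi_contDiffAt hq).differentiableAt (by simp)).hasFDerivAt
  have hl : HasDerivAt (fun s : ℝ => q + s • w) w 0 := by
    simpa using ((hasDerivAt_id (0:ℝ)).smul_const w).const_add q
  have hc : HasDerivAt (fun s : ℝ => pwPsi (q + s • w)) 0 0 := by
    rw [← hw]
    have hd' : HasFDerivAt pwPsi (fderiv ℝ pwPsi q) (q + (0:ℝ) • w) := by simpa using hd
    exact hd'.comp_hasDerivAt (0:ℝ) hl
  have c1 : HasDerivAt (fun s : ℝ => (pwPsi (q + s • w)).1) 0 0 :=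
    pw_fst hc
  have c' : HasDerivAt (fun s : ℝ => (pwPsi (q + s • w)).2) 0 0 :=
    pw_snd hc
  have c2 : HasDerivAt (fun s : ℝ => (pwPsi (q + s • w)).2.1) 0 0 :=
    pw_fst c'
  have c'' : HasDerivAt (fun s : ℝ => (pwPsi (q + s • w)).2.2) 0 0 :=
    pw_snd c'
  have c3 : HasDerivAt (fun s : ℝ => (pwPsi (q + s • w)).2.2.1) 0 0 :=
    pw_fst c''
  have c4 : HasDerivAt (fun s : ℝ => (pwPsi (q + s • w)).2.2.2) 0 0 :=
    pw_snd c''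
  obtain ⟨E, a, b, x⟩ := q
  obtain ⟨ε, u, v, ξ⟩ := w
  simp only [pwPsi, Prod.mk_add_mk, Prod.smul_mk, smul_eq_mul] at c1 c2 c3 c4 hq hab
  have lin : ∀ c d : ℝ, HasDerivAt (fun s : ℝ => c + s * d) d 0 := by
    intro c d
    simpa using ((hasDerivAt_id (0:ℝ)).mul_const d).const_add c
  have hu : u = 0 := (lin a u).unique c2
  have hv : v = 0 := (lin b v).unique c3
  subst hu hv
  simp only [mul_zero, add_zero] at c1 c4
  obtain ⟨d, hd0, hdd⟩ := pwJ_hasDerivAt hq hab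
  have hε : ε = 0 := by
    have hdd' : HasDerivAt (fun e => pwTh e b - pwTh e a) d (E + 0 * ε) := by simpa using hdd
    have h5 := hdd'.comp (0:ℝ) (lin E ε)
    have := HasDerivAt.unique h5 c1
    exact (mul_eq_zero.1 this).resolve_left hd0.ne
  subst hε
  simp only [mul_zero, add_zero] at c4
  have hξ : ξ = 0 := by
    have hx : HasDerivAt (fun x => pwTh E x - pwTh E a) (pwW E x)⁻¹ (x + 0 * ξ) := by
      simpa using (pwTh_hasDerivAt hq x).sub_const (pwTh E a)
    have h5 := hx.comp (0:ℝ) (lin x ξ)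
    have := HasDerivAt.unique h5 c4
    exact (mul_eq_zero.1 this).resolve_left (inv_ne_zero (pwW_pos hq x).ne')
  subst hξ
  rfl

lemma pwX_zero {E : ℝ} (hE : 0 < E) (a : ℝ) : pwX E a 0 = a := by
  apply (pwTh_strictMono hE).injective
  rw [pwX_spec hE, zero_add]

lemma pwF_contDiffOn :
    ContDiffOn ℝ (⊤ : ℕ∞)
      (fun p : ℝ × ℝ × ℝ × ℝ => pwX (pwE p.1 p.2.1 p.2.2.1) p.2.1 p.2.2.2)
      {p : ℝ × ℝ × ℝ × ℝ |
          0 < p.1 ∧ 2 * Real.pi ≤ p.2.2.1 - p.2.1 ∧ p.2.2.2 ∈ Set.Icc 0 p.1} := by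
  intro p hp
  have hpi := Real.pi_pos
  have hU : IsOpen {q : ℝ × ℝ × ℝ × ℝ | 0 < q.1 ∧ q.2.1 < q.2.2.1} :=
    (isOpen_lt continuous_const continuous_fst).inter
      (isOpen_lt (continuous_fst.comp continuous_snd)
        (continuous_fst.comp (continuous_snd.comp continuous_snd)))
  have h := pw_inverse (Ψ := pwPsi) (g := fun p : ℝ × ℝ × ℝ × ℝ =>
    (pwE p.1 p.2.1 p.2.2.1, p.2.1, p.2.2.1, pwX (pwE p.1 p.2.1 p.2.2.1) p.2.1 p.2.2.2))
    hU pwPsi_injOn (S := {p : ℝ × ℝ × ℝ × ℝ |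
          0 < p.1 ∧ 2 * Real.pi ≤ p.2.2.1 - p.2.1 ∧ p.2.2.2 ∈ Set.Icc 0 p.1}) (p := p)
    (by
      rintro ⟨T, a, b, t⟩ ⟨hT, hab, ht⟩
      simp only at hT hab ht
      refine ⟨⟨pwE_pos T a b, show a < b by linarith⟩, ?_⟩
      simp only [pwPsi, pwE_spec hT hab, pwX_spec (pwE_pos T a b), add_sub_cancel_right])
    hp (pwPsi_contDiffAt (pwE_pos _ _ _))
    (pwPsi_fderiv (pwE_pos _ _ _) (show p.2.1 < p.2.2.1 by linarith [hp.2.1]))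
  exact h.snd.snd.snd

lemma pwE_strictAnti {a b : ℝ} (hab : 2 * Real.pi ≤ b - a) :
    StrictAntiOn (fun T => pwE T a b) (Ioi 0) := by
  have hpi := Real.pi_pos
  intro T₁ h1 T₂ h2 h
  by_contra hn
  simp only [not_lt] at hn
  have := (pwJ_strictAnti (show a < b by linarith)).antitoneOn (pwE_pos T₁ a b)
    (pwE_pos T₂ a b) hn
  simp only [pwE_spec h1 hab, pwE_spec h2 hab] at this
  linarith

lemma pwE_lt {a b T e : ℝ} (hab : 2 * Real.pi ≤ b - a) (he : 0 < e) (hT : 0 < T)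
    (h : pwTh e b - pwTh e a < T) : pwE T a b < e := by
  have hpi := Real.pi_pos
  by_contra hn
  simp only [not_lt] at hn
  have := (pwJ_strictAnti (show a < b by linarith)).antitoneOn he (pwE_pos T a b) hn
  simp only [pwE_spec hT hab] at this
  linarith

lemma pwE_gt {a b T e : ℝ} (hab : 2 * Real.pi ≤ b - a) (he : 0 < e) (hT : 0 < T)
    (h : T < pwTh e b - pwTh e a) : e < pwE T a b := by
  have hpi := Real.pi_pos
  by_contra hn
  simp only [not_lt] at hn
  have := (pwJ_strictAnti (show a < b by linarith)).antitoneOn (pwE_pos T a b) he hn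
  simp only [pwE_spec hT hab] at this
  linarith

theorem pendulum_lemma_winding :
    ∃ F G : ℝ → ℝ → ℝ → ℝ → ℝ,
      ContDiffOn ℝ (⊤ : ℕ∞) (fun p : ℝ × ℝ × ℝ × ℝ => F p.1 p.2.1 p.2.2.1 p.2.2.2)
        {p : ℝ × ℝ × ℝ × ℝ |
          0 < p.1 ∧ 2 * Real.pi ≤ p.2.2.1 - p.2.1 ∧ p.2.2.2 ∈ Set.Icc 0 p.1} ∧
      (∀ T α β : ℝ, 0 < T → 2 * Real.pi ≤ β - α →
        (IsPendSolOn (F T α β) (G T α β) (Set.Icc 0 T) ∧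
          F T α β 0 = α ∧ F T α β T = β ∧
          (∀ t ∈ Set.Icc 0 T, α ≤ F T α β t ∧ F T α β t ≤ β)) ∧
        ∀ y : ℝ → ℝ, PendBVPmono y T α β → Set.EqOn y (F T α β) (Set.Icc 0 T)) ∧
      ∀ α β : ℝ, 2 * Real.pi ≤ β - α →
        StrictAntiOn (fun T => (G T α β 0) ^ 2 / 2 + (-Real.cos α - 1)) (Set.Ioi 0) ∧
        Filter.Tendsto (fun T => (G T α β 0) ^ 2 / 2 + (-Real.cos α - 1))
          (nhdsWithin 0 (Set.Ioi 0)) Filter.atTop ∧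
        Filter.Tendsto (fun T => (G T α β 0) ^ 2 / 2 + (-Real.cos α - 1))
          Filter.atTop (nhds 0) := by
  have hpi := Real.pi_pos
  refine ⟨fun T a b t => pwX (pwE T a b) a t, fun T a b t => pwW (pwE T a b) (pwX (pwE T a b) a t),
    pwF_contDiffOn, ?_, ?_⟩
  · intro T a b hT hab
    have hE := pwE_pos T a b
    have hsm := pwTh_strictMono hE
    have hspec := pwE_spec hT hab
    refine ⟨⟨fun t _ => ⟨pwX_hasDerivAt hE a t, pwV_hasDerivAt hE a t⟩, pwX_zero hE a, ?_, ?_⟩, ?_⟩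
    · apply hsm.injective
      simp only
      rw [pwX_spec hE]
      linarith
    · intro t ht
      constructor
      · apply hsm.le_iff_le.1
        simp only
        rw [pwX_spec hE]
        linarith [ht.1]
      · apply hsm.le_iff_le.1
        simp only
        rw [pwX_spec hE]
        linarith [ht.2]
    · rintro y ⟨⟨v, hy⟩, h0, h1, -⟩
      exact pw_unique hT hab hy h0 h1
  · intro a b hab
    have hG : (fun T => (pwW (pwE T a b) (pwX (pwE T a b) a 0)) ^ 2 / 2 + (-Real.cos a - 1))
        = fun T => pwE T a b := by
      funext T
      rw [pwX_zero (pwE_pos T a b), pwW_sq (pwE_pos T a b)]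
      ring
    simp only [hG]
    refine ⟨pwE_strictAnti hab, ?_, ?_⟩
    · rw [tendsto_atTop]
      intro M
      have hM : 0 < max M 1 := lt_max_of_lt_right one_pos
      have hJ : 0 < pwTh (max M 1) b - pwTh (max M 1) a :=
        sub_pos.2 (pwTh_strictMono hM (by linarith))
      filter_upwards [Ioo_mem_nhdsGT hJ] with T hT
      exact (le_max_left M 1).trans (pwE_gt hab hM hT.1 hT.2).le
    · rw [Metric.tendsto_atTop]
      intro ε hε
      refine ⟨max (pwTh ε b - pwTh ε a + 1) 1, fun T hT => ?_⟩
      have h1 := (le_max_left _ _).trans hT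
      have h2 := (le_max_right _ _).trans hT
      have := pwE_lt hab hε (T := T) (by linarith) (by linarith)
      rw [Real.dist_eq, sub_zero, abs_of_pos (pwE_pos T a b)]
      exact this
end
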